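/- Let Ω be a lattice in ℂ with Weierstrass functions ℘, ζ, invariants g₂, g₃, and field of endomorphisms k. Assume the Split Semi-Elliptic Conjecture for Ω: for all integers s, n ≥ 0, all ℚ-linearly independent t₁, …, t_s ∈ ℂ and all k-linearly independent p₁, …, p_n ∈ ℂ ∖ Ω, the transcendence degree over ℚ of ℚ(t₁, …, t_s, e^{t₁}, …, e^{t_s}, g₂, g₃, p₁, …, p_n, ℘(p₁), …, ℘(p_n), ζ(p₁), …, ζ(p_n)) is at least s + 2n, unless 2πi ∈ ℚt₁ + ⋯ + ℚt_s and Ω ⊆ kp₁ + ⋯ + kp_n, in which case it is at least s + 2n − 1. Assume further that g₂ and g₃ are algebraic. Let s, m, n be integers with s ≥ 0 and 0 ≤ m ≤ n. Let t₁, …, t_s be ℚ-linearly independent complex numbers such that each e^{t_ℓ} is algebraic, and let p₁, …, p_n be k-linearly independent elements of ℂ ∖ Ω such that ℘(p_i) is algebraic for 1 ≤ i ≤ m and ζ(p_j) is algebraic for m+1 ≤ j ≤ n. Then the s + n numbers t₁, …, t_s, p₁, …, p_n are algebraically independent over ℚ. -/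

import Mathlib

/-!
Write `Ω` for the lattice, `η` for its quasi-period map, and let `o` be the family consisting of
`ζ(pᵢ)` for `i < m` and `℘(pᵢ)` for `i ≥ m`, so that the field of the conjecture is algebraic over
`ℚ(t, p, o)`, a field with `s + 2n` generators. If the conjecture gives transcendence degree
`s + 2n`, these generators are algebraically independent, and so are `t, p`.

In the exceptional case one degree is lost, and the point is to show that it is not lost among
`t, p`. If `t, p` were algebraically dependent, then a transcendence basis of `ℚ(t, p)` together
with `o` would be algebraically independent (`indep_or_derivations`). Since derivations extend along
algebraic extensions in characteristic zero, there would be for every `j` a derivation `D` of `ℂ`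
with `D t = 0`, `D p = 0` and `D oᵢ = δᵢⱼ`. In particular `D(2πi) = 0`, and `D` kills `Ω`, as the
elements of `k` are algebraic. This is refuted in `no_derivations`, as follows.

* The addition theorems show that there are additive maps `g, μ : ℂ → ℂ`, with `g` zero on `Ω`, such
  that `D(℘(x)) = ℘'(x) g(x)` and `D(ζ(x)) = μ(x) - ℘(x) g(x)` (`exists_g_mu`). Comparing `ζ(x + ω)`
  with `ζ(x)` gives `μ(ω) = D(η(ω))` for `ω ∈ Ω` (`mu_period`).
* If `α Ω ⊆ Ω`, then `g(α z) = α g(z)`, and `μ(α z)` is `conj(α) μ(z)` plus a multiple of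
  `D z - g z` (`cm_g_mu`). This comes from the expression of `ζ(α z)` as a sum of translates of `ζ`
  (`cm_formula`).
* Write `M ω₁ = ∑ αᵢ pᵢ` and `M ω₂ = ∑ βᵢ pᵢ` with an integer `M ≠ 0` and complex multiplications
  `αᵢ, βᵢ`. For `j ≥ m`, `℘(p_j)` has nonzero derivative, so `g(p_j) ≠ 0`, while `g(pᵢ) = 0` for
  `i ≠ j`; applying `g` to the two relations gives `α_j = β_j = 0`. For `j < m`, `g` vanishes at all
  `pᵢ` and `μ(pᵢ) = δᵢⱼ`; applying `μ` gives `M D(η₁) = conj(α_j)` and `M D(η₂) = conj(β_j)`, and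
  then `D` of Legendre's relation `ω₁ η₂ - ω₂ η₁ = ± 2πi` gives `ω₁ conj(β_j) = ω₂ conj(α_j)`.
* The last equation thus holds for all `j`. With `ρ = ω₂/ω₁` it says that `β_j = conj(ρ) α_j` for all
  `j`, hence `ω₂ = conj(ρ) ω₁`, so that `ρ` is real, which is absurd.

None of the function theory of `ζ` beyond Mathlib's definition of `℘` is assumed: `ζ` is studied
through its series `zt`, and the comparison with the logarithmic derivative of the sigma product is
`wZeta_eq`. Legendre's relation is `quasi_periods`.
-/

open Complex

noncomputable section

/-- The lattice `ℤω₁ + ℤω₂`, as a set of complex numbers. -/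
def LatticePts (ω₁ ω₂ : ℂ) : Set ℂ := {z | ∃ m n : ℤ, z = m * ω₁ + n * ω₂}

/-- `ω₁, ω₂` are the basis of a lattice: they are `ℝ`-linearly independent. -/
def IsLatticeBasis (ω₁ ω₂ : ℂ) : Prop := LinearIndependent ℝ ![ω₁, ω₂]

/-- The nonzero lattice points. -/
def LatticePts' (ω₁ ω₂ : ℂ) : Set ℂ := {w | w ∈ LatticePts ω₁ ω₂ ∧ w ≠ 0}

/-- The Weierstrass sigma function of the lattice `ℤω₁ + ℤω₂`:
`σ(z) = z ∏_{ω ∈ Ω∖{0}} (1 − z/ω) exp(z/ω + z²/(2ω²))`. -/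
def wSigma (ω₁ ω₂ : ℂ) (z : ℂ) : ℂ :=
  z * ∏' w : LatticePts' ω₁ ω₂,
    (1 - z / (w : ℂ)) * Complex.exp (z / w + z ^ 2 / (2 * (w : ℂ) ^ 2))

/-- The Weierstrass zeta function `ζ = σ'/σ`. -/
def wZeta (ω₁ ω₂ : ℂ) (z : ℂ) : ℂ := deriv (wSigma ω₁ ω₂) z / wSigma ω₁ ω₂ z

/-- The Weierstrass elliptic function `℘ = -ζ'`. -/
def wP (ω₁ ω₂ : ℂ) (z : ℂ) : ℂ := - deriv (wZeta ω₁ ω₂) z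

/-- The invariant `g₂ = 60 Σ_{ω ∈ Ω∖{0}} ω⁻⁴` of the lattice. -/
def g2 (ω₁ ω₂ : ℂ) : ℂ := 60 * ∑' w : LatticePts' ω₁ ω₂, ((w : ℂ) ^ 4)⁻¹

/-- The invariant `g₃ = 140 Σ_{ω ∈ Ω∖{0}} ω⁻⁶` of the lattice. -/
def g3 (ω₁ ω₂ : ℂ) : ℂ := 140 * ∑' w : LatticePts' ω₁ ω₂, ((w : ℂ) ^ 6)⁻¹

/-- The quasi-period `η(ω) = ζ(z + ω) − ζ(z)` (independent of `z`; we evaluate at the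
point `(ω₁+ω₂)/3`, which is never a pole of `ζ`, nor is its translate by a lattice point). -/
def wEta (ω₁ ω₂ : ℂ) (ω : ℂ) : ℂ :=
  wZeta ω₁ ω₂ ((ω₁ + ω₂) / 3 + ω) - wZeta ω₁ ω₂ ((ω₁ + ω₂) / 3)

/-- The field of endomorphisms `k = {α ∈ ℂ : αΩ ⊆ Ω} ⊗_ℤ ℚ`, as a set of complex numbers:
the `α ∈ ℂ` such that `mα` stabilizes the lattice for some nonzero integer `m`. -/
def endQ (ω₁ ω₂ : ℂ) : Set ℂ :=
  {α | ∃ m : ℤ, m ≠ 0 ∧ ∀ w ∈ LatticePts ω₁ ω₂, (m : ℂ) * α * w ∈ LatticePts ω₁ ω₂}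

/-- The transcendence degree over `ℚ` of the subfield `ℚ(S)` of `ℂ` generated by `S` is
at least `d`: there are `d` algebraically independent elements in `ℚ(S)`. -/
def trdegGe (S : Set ℂ) (d : ℕ) : Prop :=
  ∃ x : Fin d → ℂ, (∀ i, x i ∈ IntermediateField.adjoin ℚ S) ∧ AlgebraicIndependent ℚ x

/-- `p₁, …, p_n` are linearly independent over the field of endomorphisms `k`. -/
def kLinInd (ω₁ ω₂ : ℂ) {n : ℕ} (p : Fin n → ℂ) : Prop :=
  ∀ c : Fin n → ℂ, (∀ i, c i ∈ endQ ω₁ ω₂) → ∑ i, c i * p i = 0 → ∀ i, c i = 0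

/-- The generators of the field
`K = ℚ(t₁, …, t_s, e^{t₁}, …, e^{t_s}, g₂, g₃, p₁, …, p_n, ℘(pᵢ), ζ(pᵢ))`. -/
def Kgens (ω₁ ω₂ : ℂ) {s n : ℕ} (t : Fin s → ℂ) (p : Fin n → ℂ) : Set ℂ :=
  ({g2 ω₁ ω₂, g3 ω₁ ω₂} : Set ℂ) ∪
    Set.range t ∪ Set.range (fun ℓ => Complex.exp (t ℓ)) ∪
    Set.range p ∪ Set.range (fun i => wP ω₁ ω₂ (p i)) ∪
    Set.range (fun i => wZeta ω₁ ω₂ (p i))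

/-- The exceptional case: `2πi ∈ ℚt₁ + ⋯ + ℚt_s` and `Ω ⊆ kp₁ + ⋯ + kp_n`. -/
def ExceptionalCase (ω₁ ω₂ : ℂ) {s n : ℕ} (t : Fin s → ℂ) (p : Fin n → ℂ) : Prop :=
  (2 * Real.pi * Complex.I : ℂ) ∈ Submodule.span ℚ (Set.range t) ∧
    ∀ w ∈ LatticePts ω₁ ω₂,
      ∃ c : Fin n → ℂ, (∀ i, c i ∈ endQ ω₁ ω₂) ∧ w = ∑ i, c i * p i

/-- **The Split Semi-Elliptic Conjecture** for the lattice `ℤω₁ + ℤω₂`. -/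
def SplitSemiEllipticConj (ω₁ ω₂ : ℂ) : Prop :=
  ∀ (s n : ℕ) (t : Fin s → ℂ) (p : Fin n → ℂ),
    LinearIndependent ℚ t → (∀ i, p i ∉ LatticePts ω₁ ω₂) → kLinInd ω₁ ω₂ p →
    (¬ExceptionalCase ω₁ ω₂ t p → trdegGe (Kgens ω₁ ω₂ t p) (s + 2 * n)) ∧
    (ExceptionalCase ω₁ ω₂ t p → trdegGe (Kgens ω₁ ω₂ t p) (s + 2 * n - 1))

open Filter Topology PeriodPair

/-! ### The zeta series of a period pair -/

/-- The series `1/z + ∑_{l ≠ 0} (1/(z-l) + 1/l + z/l²)` of the Weierstrass zeta function; the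
convention `1/0 = 0` makes the summand at `l = 0` equal to `1/z`. -/
def zt (L : PeriodPair) (z : ℂ) : ℂ := ∑' l : L.lattice, (1 / (z - l) + 1 / (l : ℂ) + z / (l : ℂ) ^ 2)

/-- The zeta series with the summand `1/z` removed. -/
def ztE (L : PeriodPair) (z : ℂ) : ℂ :=
  ∑' l : L.lattice, if l.1 = 0 then 0 else (1 / (z - l) + 1 / (l : ℂ) + z / (l : ℂ) ^ 2)

lemma zt_bound (r : ℝ) (hr : 0 < r) (s : ℂ) (hs : ‖s‖ < r) (l : ℂ) (h : 2 * r ≤ ‖l‖) :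
    ‖1 / (s - l) + 1 / l + s / l ^ 2‖ ≤ 2 * r ^ 2 * ‖l‖ ^ (-3 : ℝ) := by
  have h0 : 0 < ‖l‖ := by linarith
  have hl : l ≠ 0 := norm_pos_iff.mp h0
  have hsl : s - l ≠ 0 := by
    rw [sub_ne_zero]; rintro rfl; linarith
  have h1 : ‖l‖ / 2 ≤ ‖s - l‖ := by
    rw [norm_sub_rev]; exact .trans (by linarith) (norm_sub_norm_le l s)
  have e : 1 / (s - l) + 1 / l + s / l ^ 2 = s ^ 2 / ((s - l) * l ^ 2) := by
    field_simp; ring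
  rw [e, norm_div, norm_mul, norm_pow, norm_pow]
  calc ‖s‖ ^ 2 / (‖s - l‖ * ‖l‖ ^ 2) ≤ r ^ 2 / ((‖l‖ / 2) * ‖l‖ ^ 2) := by gcongr
    _ = 2 * r ^ 2 / ‖l‖ ^ 3 := by field
    _ = _ := by norm_cast

lemma hasSumLocallyUniformly_ztE (L : PeriodPair) : HasSumLocallyUniformly
    (fun (l : L.lattice) (z : ℂ) ↦
      if l.1 = 0 then 0 else (1 / (z - l) + 1 / (l : ℂ) + z / (l : ℂ) ^ 2)) (ztE L) := by
  refine L.hasSumLocallyUniformly_aux (u := fun r l => 2 * r ^ 2 * ‖l‖ ^ (-3 : ℝ)) _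
    (fun _ _ ↦ (ZLattice.summable_norm_rpow _ _ (by simp; norm_num)).mul_left _) fun r hr ↦
    Filter.eventually_atTop.mpr ⟨2 * r, ?_⟩
  rintro _ h s hs l rfl
  split_ifs
  · simpa using! show 0 ≤ 2 * r ^ 2 * (‖↑l‖ ^ 3)⁻¹ by positivity
  · exact zt_bound r hr s hs l h

lemma summable_zt (L : PeriodPair) (z : ℂ) :
    Summable (fun l : L.lattice => 1 / (z - l) + 1 / (l : ℂ) + z / (l : ℂ) ^ 2) := by
  have h := ((hasSumLocallyUniformly_ztE L).hasSum (x := z)).summable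
  have h2 : Summable (fun l : L.lattice => if l = 0 then 1 / z else 0) :=
    (hasSum_ite_eq (0 : L.lattice) (1 / z)).summable
  refine (h.add h2).congr fun l => ?_
  by_cases hl : l = 0
  · subst hl; simp
  · have : (l : ℂ) ≠ 0 := by simpa using hl
    simp [hl]

lemma zt_eq (L : PeriodPair) (z : ℂ) : zt L z = 1 / z + ztE L z := by
  have h := ((hasSumLocallyUniformly_ztE L).hasSum (x := z))
  have h2 : HasSum (fun l : L.lattice => if l = 0 then 1 / z else 0) (1 / z) :=
    (hasSum_ite_eq (0 : L.lattice) (1 / z))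
  rw [add_comm, ← (h.add h2).tsum_eq, zt]
  congr 1; ext l
  by_cases hl : l = 0
  · subst hl; simp
  · have : (l : ℂ) ≠ 0 := by simpa using hl
    simp [hl]

lemma hasDerivAt_ztE (L : PeriodPair) {z : ℂ} (hz : z ∈ ((L.lattice : Set ℂ) \ {0})ᶜ) :
    HasDerivAt (ztE L) (- L.weierstrassPExcept 0 z) z := by
  have hd : ∀ s : Finset L.lattice, DifferentiableOn ℂ (fun z => ∑ l ∈ s,
      if l.1 = 0 then 0 else (1 / (z - l) + 1 / (l : ℂ) + z / (l : ℂ) ^ 2))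
      ((L.lattice : Set ℂ) \ {0})ᶜ := by
    intro s
    refine .fun_sum fun i hi ↦ ?_
    split_ifs with h
    · simp
    refine .add (.add (.div (by fun_prop) (by fun_prop) fun x hx ↦ ?_) (by fun_prop)) (by fun_prop)
    have : x ≠ i := by rintro rfl; simp_all
    simpa [sub_eq_zero]
  have hT := (hasSumLocallyUniformly_ztE L).tendstoLocallyUniformlyOn
    (s := ((L.lattice : Set ℂ) \ {0})ᶜ)
  have hD : DifferentiableOn ℂ (ztE L) ((L.lattice : Set ℂ) \ {0})ᶜ :=
    hT.differentiableOn (.of_forall fun s => hd s) L.isOpen_compl_lattice_sdiff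
  have key : Set.EqOn (deriv (ztE L)) (fun z => - L.weierstrassPExcept 0 z)
      ((L.lattice : Set ℂ) \ {0})ᶜ := by
    refine (hT.deriv (.of_forall fun s ↦ hd s) L.isOpen_compl_lattice_sdiff).unique ?_
    have := ((L.hasSumLocallyUniformly_weierstrassPExcept 0).tendstoLocallyUniformlyOn
      (s := ((L.lattice : Set ℂ) \ {0})ᶜ)).fun_neg
    refine this.congr ?_
    intro s x hx
    symm
    simp only [Function.comp_apply]
    refine HasDerivAt.deriv ?_
    rw [← Finset.sum_neg_distrib]
    refine HasDerivAt.fun_sum fun i hi => ?_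
    split_ifs with h
    · simpa using hasDerivAt_const x (0 : ℂ)
    have hne : x - i ≠ 0 := by
      rw [sub_ne_zero]; rintro rfl; simp_all
    have h1 := ((hasDerivAt_id x).sub_const (i : ℂ)).inv hne
    have h2 := (hasDerivAt_id x).div_const ((i : ℂ) ^ 2)
    convert! ((h1.add_const (1 / (i : ℂ))).add h2) using 1
    · ext w; simp
    · simp; field_simp; ring
  have := (hD.differentiableAt (L.isOpen_compl_lattice_sdiff.mem_nhds hz)).hasDerivAt
  rwa [key hz] at this

lemma hasDerivAt_zt (L : PeriodPair) {z : ℂ} (hz : z ∉ L.lattice) :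
    HasDerivAt (zt L) (- L.weierstrassP z) z := by
  have hz0 : z ≠ 0 := by rintro rfl; exact hz (zero_mem _)
  have h1 := hasDerivAt_ztE L (z := z) (by simp [hz])
  have h2 := (hasDerivAt_inv hz0).add h1
  have e : zt L = (fun y => y⁻¹) + ztE L := by
    ext w; simp [zt_eq]
  rw [e]
  convert! h2 using 1
  have := L.weierstrassPExcept_add 0 z
  rw [← this]
  simp

lemma hasDerivAt_wp (L : PeriodPair) {z : ℂ} (hz : z ∉ L.lattice) :
    HasDerivAt L.weierstrassP (L.derivWeierstrassP z) z := by
  have h := (L.differentiableOn_weierstrassP.differentiableAt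
    (L.isClosed_lattice.isOpen_compl.mem_nhds hz)).hasDerivAt
  rwa [L.deriv_weierstrassP] at h

lemma hasDerivAt_wp' (L : PeriodPair) {z : ℂ} (hz : z ∉ L.lattice) :
    DifferentiableAt ℂ L.derivWeierstrassP z :=
  L.differentiableOn_derivWeierstrassP.differentiableAt (L.isClosed_lattice.isOpen_compl.mem_nhds hz)

lemma zt_neg (L : PeriodPair) (z : ℂ) : zt L (-z) = - zt L z := by
  simp only [zt]
  rw [← (Equiv.neg L.lattice).tsum_eq, ← tsum_neg]
  congr 1; ext l
  have : -z - -(l:ℂ) = -(z - l) := by ring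
  simp only [Equiv.neg_apply, NegMemClass.coe_neg, this, div_neg, neg_sq, neg_div]
  ring

/-! ### Liouville's theorem on a complex torus -/

lemma eventually_notMem_lattice (L : PeriodPair) (x : ℂ) : ∀ᶠ y in 𝓝[≠] x, y ∉ L.lattice := by
  have h : ((L.lattice : Set ℂ) \ {x})ᶜ ∈ 𝓝 x := L.isOpen_compl_lattice_sdiff.mem_nhds (by simp)
  filter_upwards [mem_nhdsWithin_of_mem_nhds h, self_mem_nhdsWithin] with y h1 h2 h3
  exact h1 ⟨h3, h2⟩

lemma countable_lattice (L : PeriodPair) : (L.lattice : Set ℂ).Countable := by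
  have : Countable L.lattice := L.latticeEquivProd.toEquiv.countable_iff.mpr inferInstance
  exact Set.countable_coe_iff.mp this

lemma exists_notMem_of_countable {S : Set ℂ} (h : S.Countable) : ∃ x, x ∉ S := by
  by_contra! H
  have : S = Set.univ := Set.eq_univ_of_forall H
  exact not_countable_complex (this ▸ h)

/-- Liouville's theorem on the torus, in a form allowing removable singularities. -/
lemma torus_liouville (L : PeriodPair) (H : ℂ → ℂ)
    (hper : ∀ l ∈ L.lattice, ∀ x, x ∉ L.lattice → H (x + l) = H x)
    (hloc : ∀ x0, ∃ g : ℂ → ℂ, AnalyticAt ℂ g x0 ∧ H =ᶠ[𝓝[≠] x0] g) :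
    ∃ c, ∀ x, ContinuousAt H x → H x = c := by
  choose g hg hHg using hloc
  let F : ℂ → ℂ := fun x => g x x
  have lim : ∀ x, Tendsto H (𝓝[≠] x) (𝓝 (F x)) := fun x =>
    (((hg x).continuousAt.tendsto).mono_left nhdsWithin_le_nhds).congr' (hHg x).symm
  have huniq : ∀ x c, Tendsto H (𝓝[≠] x) (𝓝 c) → F x = c := fun x c h =>
    tendsto_nhds_unique (lim x) h
  have hFg : ∀ x, F =ᶠ[𝓝 x] g x := by
    intro x
    have h1 : ∀ᶠ y in 𝓝[≠] x, F y = g x y := by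
      have h2 := (eventually_eventually_nhdsWithin.mpr (hHg x))
      have h3 : ∀ᶠ y in 𝓝[≠] x, AnalyticAt ℂ (g x) y :=
        (hg x).eventually_analyticAt.filter_mono nhdsWithin_le_nhds
      filter_upwards [h2, h3, self_mem_nhdsWithin] with y hy hy3 hne
      refine huniq y _ ?_
      have h4 : ∀ᶠ z in 𝓝 y, H z = g x z := by
        rwa [IsOpen.nhdsWithin_eq isOpen_compl_singleton hne] at hy
      exact ((hy3.continuousAt.tendsto).congr' (h4.mono fun z hz => hz.symm)).mono_left
        nhdsWithin_le_nhds
    rw [Filter.EventuallyEq, ← nhdsNE_sup_pure, eventually_sup]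
    exact ⟨h1, by simp [F]⟩
  have hdiff : Differentiable ℂ F := fun x =>
    ((hg x).congr (hFg x).symm).differentiableAt
  have hFper : ∀ x, ∀ l ∈ L.lattice, F (x + l) = F x := by
    intro x l hl
    symm
    refine huniq x _ ?_
    have : Tendsto (fun y => y + l) (𝓝[≠] x) (𝓝[≠] (x + l)) := by
      refine tendsto_nhdsWithin_iff.mpr ⟨?_, ?_⟩
      · exact ((continuous_id.add continuous_const).tendsto' x _ rfl).mono_left nhdsWithin_le_nhds
      · filter_upwards [self_mem_nhdsWithin] with y hy
        simpa using hy
    refine ((lim (x + l)).comp this).congr' ?_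
    filter_upwards [eventually_notMem_lattice L x] with y hy
    simp [hper l hl y hy]
  have hb : Bornology.IsBounded (Set.range F) :=
    (IsZLattice.isCompact_range_of_periodic L.lattice F hdiff.continuous hFper).isBounded
  refine ⟨F 0, fun x hx => ?_⟩
  rw [← hdiff.apply_eq_apply_of_bounded hb x 0]
  exact (huniq x _ (hx.tendsto.mono_left nhdsWithin_le_nhds)).symm

/-! ### Legendre's relation -/

lemma tsum_int_telescope (F : ℤ → ℂ) (a b : ℂ) (hs : Summable fun n : ℤ => F (n - 1) - F n)
    (ha : Tendsto (fun n : ℕ => F n) atTop (𝓝 a))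
    (hb : Tendsto (fun n : ℕ => F (-n)) atTop (𝓝 b)) :
    ∑' n : ℤ, (F (n - 1) - F n) = b - a := by
  have h1 : Summable fun n : ℕ => F ((n : ℤ) - 1) - F n :=
    hs.comp_injective (i := fun n : ℕ => (n : ℤ)) (fun a b h => by simpa using h)
  have h2 : Summable fun n : ℕ => F (-((n : ℤ) + 1) - 1) - F (-((n : ℤ) + 1)) :=
    hs.comp_injective (i := fun n : ℕ => -((n : ℤ) + 1)) (fun a b h => by simpa using h)
  have e1 : ∑' n : ℕ, (F ((n : ℤ) - 1) - F n) = F (-1) - a := by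
    refine tendsto_nhds_unique h1.hasSum.tendsto_sum_nat ?_
    have := tendsto_const_nhds (x := F (-1)) |>.sub (ha.comp (tendsto_sub_atTop_nat 1))
    refine this.congr' ?_
    filter_upwards [eventually_ge_atTop 1] with N hN
    have := Finset.sum_range_sub' (fun n : ℕ => F ((n : ℤ) - 1)) N
    simp only [Nat.cast_add, Nat.cast_one, add_sub_cancel_right] at this
    rw [this]; simp [Nat.cast_sub hN]
  have e2 : ∑' n : ℕ, (F (-((n : ℤ) + 1) - 1) - F (-((n : ℤ) + 1))) = b - F (-1) := by
    refine tendsto_nhds_unique h2.hasSum.tendsto_sum_nat ?_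
    have := (hb.comp (tendsto_add_atTop_nat 1)).sub (tendsto_const_nhds (x := F (-1)))
    refine this.congr fun N => ?_
    have := Finset.sum_range_sub (fun n : ℕ => F (-((n : ℤ) + 1))) N
    simp only [Function.comp_apply, Nat.cast_add, Nat.cast_one, Nat.cast_zero, zero_add] at this ⊢
    rw [← this]
    refine Finset.sum_congr rfl fun i _ => ?_
    congr 2
  rw [(h1.hasSum.of_nat_of_neg_add_one (f := fun n : ℤ => F (n - 1) - F n) h2.hasSum).tsum_eq,
    e1, e2]
  ring

lemma tendsto_cot_atTop (u ρ : ℂ) (h : 0 < ρ.im) :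
    Tendsto (fun n : ℕ => cot (Real.pi * (u + n * ρ))) atTop (𝓝 (-I)) := by
  have hq : Tendsto (fun n : ℕ => Complex.exp (2 * Real.pi * I * (u + n * ρ))) atTop (𝓝 0) := by
    have h1 : ∀ n : ℕ, Complex.exp (2 * Real.pi * I * (u + n * ρ)) =
        Complex.exp (2 * Real.pi * I * u) * Complex.exp (2 * Real.pi * I * ρ) ^ n := by
      intro n
      rw [← Complex.exp_nat_mul, ← Complex.exp_add]; congr 1; ring
    simp_rw [h1]
    have : ‖Complex.exp (2 * Real.pi * I * ρ)‖ < 1 :=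
      UpperHalfPlane.norm_exp_two_pi_I_lt_one ⟨ρ, h⟩
    simpa using (tendsto_pow_atTop_nhds_zero_of_norm_lt_one this).const_mul
      (Complex.exp (2 * Real.pi * I * u))
  simp_rw [Complex.cot_pi_eq_exp_ratio]
  have := Filter.Tendsto.div (hq.add_const 1) ((tendsto_const_nhds (x := (1:ℂ)).sub hq).const_mul I) (by simp)
  simpa [Pi.div_def] using this

lemma cot_neg' (z : ℂ) : cot (-z) = - cot z := by
  simp [Complex.cot, div_neg]

lemma tendsto_cot_atBot (u ρ : ℂ) (h : ρ.im < 0) :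
    Tendsto (fun n : ℕ => cot (Real.pi * (u + n * ρ))) atTop (𝓝 I) := by
  have := (tendsto_cot_atTop (-u) (-ρ) (by simpa)).neg
  rw [neg_neg] at this
  refine this.congr fun n => ?_
  rw [← cot_neg']; congr 1; ring

lemma lat_mem (L : PeriodPair) (m n : ℤ) : (m : ℂ) * L.ω₁ + n * L.ω₂ ∈ L.lattice :=
  L.mem_lattice.mpr ⟨m, n, rfl⟩

lemma w1_ne (L : PeriodPair) : L.ω₁ ≠ 0 := by
  simpa using L.indep.ne_zero 0

lemma im_ne (L : PeriodPair) : (L.ω₂ / L.ω₁).im ≠ 0 := by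
  intro h
  have h1 := w1_ne L
  have h2 : ((L.ω₂ / L.ω₁).re : ℂ) = L.ω₂ / L.ω₁ := by
    apply Complex.ext <;> simp [h]
  have := LinearIndependent.pair_iff.mp L.indep ((L.ω₂ / L.ω₁).re) (-1) (by
    rw [Complex.real_smul, h2]; field_simp; simp)
  simpa using this.2

lemma summable_row (L : PeriodPair) (w : ℂ) :
    Summable fun m : ℤ => 1 / (w - m * L.ω₁) + 1 / (m * L.ω₁) := by
  have h1 := (summable_zt L w).comp_injective
    (i := fun m : ℤ => L.latticeEquivProd.symm (m, 0))
    (fun a b h => by simpa using h)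
  have h2 : Summable fun m : ℤ => w / ((m : ℂ) * L.ω₁) ^ 2 := by
    have := (Real.summable_one_div_int_pow.mpr (le_refl 2))
    have h3 : Summable fun m : ℤ => ((1 / (m : ℝ) ^ 2 : ℝ) : ℂ) := by exact_mod_cast this
    refine (h3.mul_left (w / L.ω₁ ^ 2)).congr fun m => ?_
    push_cast
    rw [mul_pow, div_mul_div_comm, mul_one, mul_comm (L.ω₁ ^ 2)]
  refine (h1.sub h2).congr fun m => ?_
  simp [Function.comp, latticeEquiv_symm_apply]

/-- Sum over a row of the lattice, in a form which converges absolutely. -/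
def rowK (L : PeriodPair) (w : ℂ) : ℂ := ∑' m : ℤ, (1 / (w - m * L.ω₁) + 1 / (m * L.ω₁))

lemma rowK_eq (L : PeriodPair) (w : ℂ) (hw : ∀ m : ℤ, w ≠ m * L.ω₁) :
    rowK L w = Real.pi / L.ω₁ * cot (Real.pi * (w / L.ω₁)) := by
  have h0 := w1_ne L
  have hs := summable_row L w
  have h1 := hs.comp_injective (i := fun n : ℕ => ((n : ℤ) + 1)) (fun a b h => by simpa using h)
  have h2 := hs.comp_injective (i := fun n : ℕ => -((n : ℤ) + 1)) (fun a b h => by simpa using h)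
  have hx : w / L.ω₁ ∈ integerComplement := by
    rw [Complex.mem_integerComplement_iff]
    rintro ⟨m, hm⟩
    exact hw m (by rw [hm]; field_simp)
  have hc := cot_series_rep' hx
  have key : rowK L w = _ := (h1.hasSum.of_add_one_of_neg_add_one
    (f := fun m : ℤ => 1 / (w - m * L.ω₁) + 1 / (m * L.ω₁)) h2.hasSum).tsum_eq
  rw [key, add_right_comm, ← h1.tsum_add h2]
  simp only [Function.comp_apply]
  have hw0 : w ≠ 0 := by simpa using hw 0
  have : Real.pi / L.ω₁ * cot (Real.pi * (w / L.ω₁)) =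
      (∑' n : ℕ, (1 / (w / L.ω₁ - (n + 1)) + 1 / (w / L.ω₁ + (n + 1)))) / L.ω₁ + 1 / w := by
    rw [← hc]; field_simp; ring
  rw [this, ← tsum_div_const]
  refine congrArg₂ _ (tsum_congr fun n => ?_) (by simp)
  have a1 : w - (n + 1) * L.ω₁ ≠ 0 := by
    have := hw (n + 1); push_cast at this; exact sub_ne_zero.mpr this
  have a2 : w + (n + 1) * L.ω₁ ≠ 0 := by
    have := hw (-(n + 1)); push_cast at this
    intro h; exact this (by linear_combination h)
  have e1 : w / L.ω₁ - (n + 1) = (w - (n + 1) * L.ω₁) / L.ω₁ := by field_simp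
  have e2 : w / L.ω₁ + (n + 1) = (w + (n + 1) * L.ω₁) / L.ω₁ := by field_simp
  rw [e1, e2]
  push_cast
  have e4 : (n : ℂ) + 1 ≠ 0 := by exact_mod_cast Nat.succ_ne_zero n
  have e5 : (-1 + -(n : ℂ)) * L.ω₁ = - ((n + 1) * L.ω₁) := by ring
  simp only [neg_add_rev, e5, sub_neg_eq_add]
  generalize (w - (n + 1) * L.ω₁) = A at *
  generalize (w + (n + 1) * L.ω₁) = B at *
  generalize (n : ℂ) + 1 = C at *
  field_simp
  ring

/-- The quasi-periods of the zeta series and Legendre's relation. The sum over the lattice is taken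
row by row; the rows in the direction `ω₁` telescope, and the remaining sum of the rows produces
two limits of the cotangent, which account for `2πi`. -/
theorem quasi_periods (L : PeriodPair) : ∃ η₁ η₂ e : ℂ, (e = 1 ∨ e = -1) ∧
    (∀ z, z ∉ L.lattice → zt L (z + L.ω₁) = zt L z + η₁) ∧
    (∀ z, z ∉ L.lattice → zt L (z + L.ω₂) = zt L z + η₂) ∧
    L.ω₁ * η₂ - L.ω₂ * η₁ = e * (2 * Real.pi * I) := by
  have h0 := w1_ne L
  let φ : ℤ × ℤ ≃ L.lattice := ((Equiv.prodComm ℤ ℤ).trans L.latticeEquivProd.symm.toEquiv)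
  have hφ : ∀ n m : ℤ, ((φ (n, m) : L.lattice) : ℂ) = m * L.ω₁ + n * L.ω₂ := by
    intro n m
    simp [φ, latticeEquiv_symm_apply]
  let q : ℤ → ℤ → ℂ := fun n m => 1 / ((m * L.ω₁ + n * L.ω₂ : ℂ)) ^ 2
  let s : ℤ → ℂ := fun n => ∑' m : ℤ, q n m
  -- the double series of the difference, for a translation `w`
  have main : ∀ z w : ℂ, HasSum (fun x : ℤ × ℤ => 1 / (z + w - (x.2 * L.ω₁ + x.1 * L.ω₂)) -
      1 / (z - (x.2 * L.ω₁ + x.1 * L.ω₂)) + w * q x.1 x.2) (zt L (z + w) - zt L z) := by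
    intro z w
    have h1 := (summable_zt L (z + w)).hasSum.sub (summable_zt L z).hasSum
    have h2 := φ.hasSum_iff.mpr h1
    refine h2.congr_fun ?_ 
    rintro ⟨n, m⟩
    simp only [Function.comp_apply, hφ, q]
    ring
  have qsum : ∀ n, Summable (q n) := by
    intro n
    have h1 := (main 0 L.ω₁).summable.prod_factor n
    have h2 := (summable_row L (0 + L.ω₁ - n * L.ω₂)).sub (summable_row L (0 - n * L.ω₂))
    have h3 := (h1.sub h2).mul_left (L.ω₁⁻¹)
    refine h3.congr fun m => ?_
    have e1 : 0 + L.ω₁ - (m * L.ω₁ + n * L.ω₂) = 0 + L.ω₁ - n * L.ω₂ - m * L.ω₁ := by ring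
    have e2 : 0 - (m * L.ω₁ + n * L.ω₂) = 0 - n * L.ω₂ - m * L.ω₁ := by ring
    rw [e1, e2]
    field_simp
    ring
  have rows : ∀ z w : ℂ, HasSum (fun n : ℤ => rowK L (z + w - n * L.ω₂) - rowK L (z - n * L.ω₂)
      + w * s n) (zt L (z + w) - zt L z) := by
    intro z w
    refine (main z w).prod_fiberwise fun n => ?_
    have h2 := ((summable_row L (z + w - n * L.ω₂)).hasSum.sub
      (summable_row L (z - n * L.ω₂)).hasSum).add ((qsum n).hasSum.mul_left w)
    refine h2.congr_fun ?_
    intro m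
    have e1 : z + w - (m * L.ω₁ + n * L.ω₂) = z + w - n * L.ω₂ - m * L.ω₁ := by ring
    have e2 : z - (m * L.ω₁ + n * L.ω₂) = z - n * L.ω₂ - m * L.ω₁ := by ring
    simp only [e1, e2]
    ring
  have rowper : ∀ w, rowK L (w + L.ω₁) = rowK L w := by
    intro w
    rw [← sub_eq_zero, rowK, rowK, ← (summable_row L _).tsum_sub (summable_row L _)]
    have hlim : ∀ u : ℂ, Tendsto (fun n : ℕ => 1 / (w + u * n * L.ω₁)) atTop (𝓝 0) ∨ u = 0 := by
      intro u
      by_cases hu : u = 0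
      · exact Or.inr hu
      left
      simp only [one_div]
      refine tendsto_inv₀_cobounded.comp ?_
      have h1 : Tendsto (fun n : ℕ => (n : ℂ)) atTop (Bornology.cobounded ℂ) := by
        rw [← tendsto_norm_atTop_iff_cobounded]
        simpa using tendsto_natCast_atTop_atTop (R := ℝ)
      have h2 : Tendsto (fun x : ℂ => w + (u * L.ω₁) * x) (Bornology.cobounded ℂ)
          (Bornology.cobounded ℂ) :=
        (tendsto_const_add_cobounded w).comp (tendsto_mul_left_cobounded (mul_ne_zero hu h0))
      refine (h2.comp h1).congr fun n => ?_
      simp; ring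
    have e : ∀ m : ℤ, 1 / (w + L.ω₁ - m * L.ω₁) + 1 / (m * L.ω₁) -
        (1 / (w - m * L.ω₁) + 1 / (m * L.ω₁)) =
        1 / (w - ((m - 1 : ℤ) : ℂ) * L.ω₁) - 1 / (w - m * L.ω₁) := by
      intro m; push_cast
      have : w + L.ω₁ - m * L.ω₁ = w - (m - 1) * L.ω₁ := by ring
      rw [this]; ring
    simp_rw [e]
    rw [tsum_int_telescope (fun m : ℤ => 1 / (w - m * L.ω₁)) 0 0, sub_zero]
    · exact ((summable_row L (w + L.ω₁)).sub (summable_row L w)).congr fun m => (e m)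
    · refine ((hlim (-1)).resolve_right (by simp)).congr fun n => ?_
      push_cast; ring
    · refine ((hlim 1).resolve_right (by simp)).congr fun n => ?_
      push_cast; ring
  have ssum : Summable s := by
    have h1 := (rows 0 L.ω₁).summable.mul_left (L.ω₁⁻¹)
    refine h1.congr fun n => ?_
    have : (0 : ℂ) + L.ω₁ - n * L.ω₂ = (0 - n * L.ω₂) + L.ω₁ := by ring
    rw [this, rowper]; field_simp; ring
  obtain ⟨e, he, hlim1, hlim2⟩ : ∃ e : ℂ, (e = 1 ∨ e = -1) ∧
      (∀ u : ℂ, Tendsto (fun n : ℕ => cot (Real.pi * (u + n * (-(L.ω₂ / L.ω₁))))) atTop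
        (𝓝 (e * I))) ∧
      (∀ u : ℂ, Tendsto (fun n : ℕ => cot (Real.pi * (u + n * (L.ω₂ / L.ω₁)))) atTop
        (𝓝 (-e * I))) := by
    rcases lt_or_gt_of_ne (im_ne L) with h | h
    · refine ⟨-1, Or.inr rfl, fun u => ?_, fun u => ?_⟩
      · simpa using tendsto_cot_atTop u (-(L.ω₂ / L.ω₁)) (by simpa using h)
      · simpa using tendsto_cot_atBot u (L.ω₂ / L.ω₁) h
    · refine ⟨1, Or.inl rfl, fun u => ?_, fun u => ?_⟩
      · simpa using tendsto_cot_atBot u (-(L.ω₂ / L.ω₁)) (by simpa using h)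
      · simpa using tendsto_cot_atTop u (L.ω₂ / L.ω₁) h
  refine ⟨L.ω₁ * ∑' n, s n, L.ω₂ * ∑' n, s n - e * (2 * Real.pi * I) / L.ω₁, -e, ?_, ?_, ?_, ?_⟩
  · rcases he with h | h <;> simp [h]
  · intro z _
    rw [← sub_eq_iff_eq_add', ← (rows z L.ω₁).tsum_eq, ← tsum_mul_left]
    refine tsum_congr fun n => ?_
    have : z + L.ω₁ - n * L.ω₂ = (z - n * L.ω₂) + L.ω₁ := by ring
    rw [this, rowper]; ring
  · intro z hz
    rw [← sub_eq_iff_eq_add', ← (rows z L.ω₂).tsum_eq]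
    have hsm : Summable fun n : ℤ => rowK L (z - ((n - 1 : ℤ) : ℂ) * L.ω₂) - rowK L (z - n * L.ω₂) := by
      refine ((rows z L.ω₂).summable.sub (ssum.mul_left L.ω₂)).congr fun n => ?_
      have : z + L.ω₂ - n * L.ω₂ = z - ((n - 1 : ℤ) : ℂ) * L.ω₂ := by push_cast; ring
      rw [this]; ring
    have key : ∀ n : ℤ, rowK L (z - n * L.ω₂) =
        Real.pi / L.ω₁ * cot (Real.pi * (z / L.ω₁ + n * (-(L.ω₂ / L.ω₁)))) := by
      intro n
      rw [rowK_eq]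
      · congr 3; field_simp; ring
      · intro m h
        apply hz
        rw [sub_eq_iff_eq_add] at h
        rw [h]; exact lat_mem L m n
    have tel := tsum_int_telescope (fun n : ℤ => rowK L (z - n * L.ω₂))
      (Real.pi / L.ω₁ * (e * I)) (Real.pi / L.ω₁ * (-e * I)) hsm
      (by
        simp_rw [key]
        exact_mod_cast (hlim1 (z / L.ω₁)).const_mul (Real.pi / L.ω₁ : ℂ))
      (by
        simp_rw [key]
        refine ((hlim2 (z / L.ω₁)).const_mul (Real.pi / L.ω₁ : ℂ)).congr fun n => ?_
        push_cast
        congr 3; ring)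
    have : ∀ n : ℤ, rowK L (z + L.ω₂ - n * L.ω₂) - rowK L (z - n * L.ω₂) + L.ω₂ * s n =
        (rowK L (z - ((n - 1 : ℤ) : ℂ) * L.ω₂) - rowK L (z - n * L.ω₂)) + L.ω₂ * s n := by
      intro n
      have : z + L.ω₂ - n * L.ω₂ = z - ((n - 1 : ℤ) : ℂ) * L.ω₂ := by push_cast; ring
      rw [this]
    simp_rw [this]
    rw [hsm.tsum_add (ssum.mul_left _), tel, tsum_mul_left]
    ring
  · field_simp; ring

/-! ### The addition theorem of the zeta function -/

lemma dslope_two {f : ℂ → ℂ} {x0 a b : ℂ} (hf : AnalyticAt ℂ f x0) (ha : f x0 = a)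
    (hb : HasDerivAt f b x0) : ∃ g : ℂ → ℂ, AnalyticAt ℂ g x0 ∧
      ∀ x, f x = a + b * (x - x0) + (x - x0) ^ 2 * g x := by
  obtain ⟨p, hp⟩ := hf
  have h1 := hp.has_fpower_series_dslope_fslope
  have h2 := h1.has_fpower_series_dslope_fslope
  refine ⟨_, ⟨_, h2⟩, fun x => ?_⟩
  have e1 := sub_smul_dslope f x0 x
  have e2 := sub_smul_dslope (dslope f x0) x0 x
  rw [dslope_same, hb.deriv] at e2
  simp only [smul_eq_mul] at e1 e2
  linear_combination -e1 - (x - x0) * e2 + ha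

lemma quasi_int {S : Submodule ℤ ℂ} {f : ℂ → ℂ} {w c : ℂ} (hw : w ∈ S)
    (h : ∀ z, z ∉ S → f (z + w) = f z + c) (m : ℤ) :
    ∀ z, z ∉ S → f (z + m * w) = f z + m * c := by
  have hmem : ∀ (m : ℤ) z, z ∉ S → z + m * w ∉ S := by
    intro m z hz h1
    exact hz ((S.add_mem_iff_left (by simpa using S.smul_mem m hw)).mp h1)
  induction m using Int.induction_on with
  | zero => simp
  | succ i ih =>
    intro z hz
    have := h _ (hmem i z hz)
    rw [ih z hz] at this
    push_cast at this ⊢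
    rw [add_mul, ← add_assoc, one_mul, this]; ring
  | pred i ih =>
    intro z hz
    have := h _ (hmem (-(i : ℤ) - 1) z hz)
    have e : z + ((-(i : ℤ) - 1 : ℤ) : ℂ) * w + w = z + ((-(i : ℤ) : ℤ) : ℂ) * w := by
      push_cast; ring
    rw [e, ih z hz] at this
    push_cast at this ⊢
    linear_combination -this

lemma add_notMem (L : PeriodPair) {z l : ℂ} (hl : l ∈ L.lattice) : z + l ∈ L.lattice ↔ z ∈ L.lattice :=
  L.lattice.add_mem_iff_left hl

lemma quasi_lattice (L : PeriodPair) {η₁ η₂ : ℂ}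
    (h1 : ∀ z, z ∉ L.lattice → zt L (z + L.ω₁) = zt L z + η₁)
    (h2 : ∀ z, z ∉ L.lattice → zt L (z + L.ω₂) = zt L z + η₂) (m n : ℤ) :
    ∀ z, z ∉ L.lattice → zt L (z + (m * L.ω₁ + n * L.ω₂)) = zt L z + (m * η₁ + n * η₂) := by
  have m1 : L.ω₁ ∈ L.lattice := L.mem_lattice.mpr ⟨1, 0, by simp⟩
  have m2 : L.ω₂ ∈ L.lattice := L.mem_lattice.mpr ⟨0, 1, by simp⟩
  intro z hz
  have hz' : z + m * L.ω₁ ∉ L.lattice := by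
    rwa [add_notMem L (by simpa using L.lattice.smul_mem m m1)]
  rw [← add_assoc, quasi_int m2 h2 n _ hz', quasi_int m1 h1 m z hz]
  ring

lemma quasi_exists (L : PeriodPair) {l : ℂ} (hl : l ∈ L.lattice) :
    ∃ c, ∀ z, z ∉ L.lattice → zt L (z + l) = zt L z + c := by
  obtain ⟨η₁, η₂, e, -, h1, h2, -⟩ := quasi_periods L
  obtain ⟨m, n, rfl⟩ := L.mem_lattice.mp hl
  exact ⟨_, quasi_lattice L h1 h2 m n⟩

lemma analyticAt_zt (L : PeriodPair) {z : ℂ} (hz : z ∉ L.lattice) : AnalyticAt ℂ (zt L) z := by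
  refine DifferentiableOn.analyticAt (s := (L.lattice : Set ℂ)ᶜ) ?_
    (L.isClosed_lattice.isOpen_compl.mem_nhds hz)
  intro x hx
  exact (hasDerivAt_zt L hx).differentiableAt.differentiableWithinAt

lemma analyticAt_ztE (L : PeriodPair) : AnalyticAt ℂ (ztE L) 0 := by
  refine DifferentiableOn.analyticAt (s := ((L.lattice : Set ℂ) \ {0})ᶜ) ?_
    (L.isOpen_compl_lattice_sdiff.mem_nhds (by simp))
  intro x hx
  exact (hasDerivAt_ztE L hx).differentiableAt.differentiableWithinAt

lemma analyticAt_wp (L : PeriodPair) {z : ℂ} (hz : z ∉ L.lattice) :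
    AnalyticAt ℂ L.weierstrassP z := L.analyticOnNhd_weierstrassP z hz

lemma analyticAt_wp' (L : PeriodPair) {z : ℂ} (hz : z ∉ L.lattice) :
    AnalyticAt ℂ L.derivWeierstrassP z := L.analyticOnNhd_derivWeierstrassP z hz

/-- The function whose vanishing is the addition theorem of the zeta function. -/
def addH (L : PeriodPair) (y x : ℂ) : ℂ :=
  (zt L (x + y) - zt L y - zt L x) * (℘[L] x - ℘[L] y) - (℘'[L] x - ℘'[L] y) / 2

lemma neg_notMem (L : PeriodPair) {z : ℂ} : -z ∈ L.lattice ↔ z ∈ L.lattice := L.lattice.neg_mem_iff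

lemma wp_per (L : PeriodPair) (z : ℂ) {l : ℂ} (hl : l ∈ L.lattice) : ℘[L] (z + l) = ℘[L] z := by
  lift l to L.lattice using hl
  simp

lemma wp'_per (L : PeriodPair) (z : ℂ) {l : ℂ} (hl : l ∈ L.lattice) : ℘'[L] (z + l) = ℘'[L] z := by
  lift l to L.lattice using hl
  simp

lemma addH_per (L : PeriodPair) {y : ℂ} {l : ℂ} (hl : l ∈ L.lattice) {x : ℂ}
    (hx : x ∉ L.lattice) : addH L y (x + l) = addH L y x := by
  obtain ⟨c, hc⟩ := quasi_exists L hl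
  simp only [addH, wp_per L _ hl, wp'_per L _ hl]
  by_cases h : x + y ∈ L.lattice
  · have : ℘[L] x = ℘[L] y := by
      have h1 := wp_per L (-y) h
      rw [← L.weierstrassP_neg y, ← h1]; congr 1; ring
    rw [this]; simp
  · have e : x + l + y = x + y + l := by ring
    rw [e, hc _ h, hc _ hx]; ring

/-- At `0` the poles of `addH L y` cancel: the singularity is removable. -/
lemma addH_local_zero (L : PeriodPair) {y : ℂ} (hy : y ∉ L.lattice) :
    ∃ g : ℂ → ℂ, AnalyticAt ℂ g 0 ∧ addH L y =ᶠ[𝓝[≠] 0] g := by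
  have hA : HasDerivAt (fun x => zt L (x + y)) (- ℘[L] y) 0 := by
    have := hasDerivAt_zt L (z := 0 + y) (by simpa using hy)
    simpa using this.comp_add_const 0 y
  have hAa : AnalyticAt ℂ (fun x => zt L (x + y)) 0 := by
    have := analyticAt_zt L (z := 0 + y) (by simpa using hy)
    exact this.comp (f := fun x => x + y) (by fun_prop)
  obtain ⟨a, ha, hae⟩ := dslope_two hAa rfl hA
  have hE : HasDerivAt (ztE L) 0 0 := by
    have := hasDerivAt_ztE L (z := 0) (by simp)
    simpa using this
  obtain ⟨b, hb, hbe⟩ := dslope_two (analyticAt_ztE L) rfl hE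
  have hPa : AnalyticAt ℂ (L.weierstrassPExcept 0) 0 := L.analyticAt_weierstrassPExcept 0
  have hQa : AnalyticAt ℂ (L.derivWeierstrassPExcept 0) 0 := L.analyticAt_derivWeierstrassPExcept 0
  obtain ⟨c, hc, hce⟩ := dslope_two hPa rfl hPa.differentiableAt.hasDerivAt
  set c1 := deriv (L.weierstrassPExcept 0) 0
  have hE0 : ztE L 0 = 0 := by
    simp [ztE]
  have hP0 : L.weierstrassPExcept 0 0 = 0 := by simp
  refine ⟨fun x => a x + (zt L (x + y) - zt L y) * (L.weierstrassPExcept 0 x - ℘[L] y) - (c1 + x * c x) - b x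
    - ztE L x * (L.weierstrassPExcept 0 x - ℘[L] y) - L.derivWeierstrassPExcept 0 x / 2 + ℘'[L] y / 2, ?_, ?_⟩
  · have := analyticAt_ztE L
    fun_prop
  filter_upwards [self_mem_nhdsWithin] with x hx
  have hx : x ≠ 0 := hx
  have e1 : ℘[L] x = L.weierstrassPExcept 0 x + 1 / x ^ 2 := by
    have := L.weierstrassPExcept_add 0 x
    rw [← this]; simp
  have e2 : ℘'[L] x = L.derivWeierstrassPExcept 0 x - 2 / x ^ 3 := by
    have := L.derivWeierstrassPExcept_sub 0 x
    rw [← this]; simp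
  have hbx := hbe x
  have hcx := hce x
  have hax := hae x
  simp only [hE0, hP0, sub_zero, zero_add] at hbx hcx hax
  simp only [addH, e1, e2, zt_eq L x]
  generalize ztE L x = E at *
  generalize L.weierstrassPExcept 0 x = P at *
  generalize zt L (x + y) = Z at *
  subst hcx hbx hax
  field_simp
  ring

/-- At `-y` the simple pole of `zt L (x + y)` is killed by the zero of `℘ x - ℘ y`. -/
lemma addH_local_neg (L : PeriodPair) {y : ℂ} (hy : y ∉ L.lattice) :
    ∃ g : ℂ → ℂ, AnalyticAt ℂ g (-y) ∧ addH L y =ᶠ[𝓝[≠] (-y)] g := by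
  have hy' : -y ∉ L.lattice := by rwa [neg_notMem]
  obtain ⟨a, ha, hae⟩ := dslope_two (analyticAt_wp L hy') rfl (hasDerivAt_wp L hy')
  have h1 := analyticAt_wp L hy'
  have h2 := analyticAt_wp' L hy'
  have h3 := analyticAt_zt L hy'
  have h4 : AnalyticAt ℂ (fun x => ztE L (x + y)) (-y) := by
    have := analyticAt_ztE L
    exact AnalyticAt.comp (g := ztE L) (f := fun x => x + y) (by simpa using this) (by fun_prop)
  refine ⟨fun x => (℘'[L] (-y) + (x + y) * a x) + (ztE L (x + y) - zt L y - zt L x) *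
    (℘[L] x - ℘[L] y) - (℘'[L] x - ℘'[L] y) / 2, by fun_prop, ?_⟩
  filter_upwards [self_mem_nhdsWithin] with x hx
  have hx : x + y ≠ 0 := fun h => hx (by simpa using eq_neg_of_add_eq_zero_left h)
  have := hae x
  simp only [L.weierstrassP_neg, sub_neg_eq_add] at this
  simp only [addH, zt_eq L (x + y)]
  have e : ℘[L] x - ℘[L] y = (x + y) * (℘'[L] (-y) + (x + y) * a x) := by
    rw [this]; ring
  rw [e]; field_simp; ring

lemma addH_analyticAt (L : PeriodPair) {y x : ℂ} (hx : x ∉ L.lattice)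
    (hxy : x + y ∉ L.lattice) : AnalyticAt ℂ (addH L y) x := by
  have h1 := analyticAt_wp L hx
  have h2 := analyticAt_wp' L hx
  have h3 := analyticAt_zt L hx
  have h4 : AnalyticAt ℂ (fun x => zt L (x + y)) x :=
    (analyticAt_zt L hxy).comp (f := fun x => x + y) (by fun_prop)
  unfold addH
  fun_prop

/-- All singularities of `addH L y` are removable; by periodicity only `0` and `-y` matter. -/
lemma addH_local (L : PeriodPair) {y : ℂ} (hy : y ∉ L.lattice) (x0 : ℂ) :
    ∃ g : ℂ → ℂ, AnalyticAt ℂ g x0 ∧ addH L y =ᶠ[𝓝[≠] x0] g := by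
  have shift : ∀ u l : ℂ, l ∈ L.lattice →
      (∃ g : ℂ → ℂ, AnalyticAt ℂ g u ∧ addH L y =ᶠ[𝓝[≠] u] g) →
      (∃ g : ℂ → ℂ, AnalyticAt ℂ g (u + l) ∧ addH L y =ᶠ[𝓝[≠] (u + l)] g) := by
    rintro u l hl ⟨g, hg, hge⟩
    refine ⟨fun x => g (x - l), ?_, ?_⟩
    · exact AnalyticAt.comp (g := g) (f := fun x => x - l) (by simpa using hg) (by fun_prop)
    have ht : Tendsto (fun x => x - l) (𝓝[≠] (u + l)) (𝓝[≠] u) := by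
      refine tendsto_nhdsWithin_iff.mpr ⟨?_, ?_⟩
      · exact ((continuous_id.sub continuous_const).tendsto' (u + l) _ (by simp)).mono_left
          nhdsWithin_le_nhds
      · filter_upwards [self_mem_nhdsWithin] with y hy h
        exact hy (by simpa [sub_eq_iff_eq_add] using h)
    filter_upwards [ht.eventually hge, eventually_notMem_lattice L (u + l)] with x h1 h2
    rw [← h1]
    have : x - l ∉ L.lattice := by
      rwa [← add_notMem L hl, sub_add_cancel]
    rw [← addH_per L hl this, sub_add_cancel]
  by_cases h1 : x0 ∈ L.lattice
  · simpa using shift 0 x0 h1 (addH_local_zero L hy)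
  by_cases h2 : x0 + y ∈ L.lattice
  · simpa using shift (-y) _ h2 (addH_local_neg L hy)
  exact ⟨_, addH_analyticAt L h1 h2, by rfl⟩

/-- The addition theorem of the zeta function, cleared of denominators. For fixed `y` the
difference of the two sides is a constant `c y` by Liouville. It is antisymmetric in `x` and `y`,
so `c z = 0` for generic `z` (take `x = z`), and then `c y = -c z = 0`. -/
theorem zt_add (L : PeriodPair) {x y : ℂ} (hx : x ∉ L.lattice) (hy : y ∉ L.lattice)
    (hxy : x + y ∉ L.lattice) :
    (zt L (x + y) - zt L y - zt L x) * (℘[L] x - ℘[L] y) = (℘'[L] x - ℘'[L] y) / 2 := by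
  rw [← sub_eq_zero]
  change addH L y x = 0
  have key : ∀ y, y ∉ L.lattice → ∃ c, ∀ x, x ∉ L.lattice → x + y ∉ L.lattice →
      addH L y x = c := by
    intro y hy
    obtain ⟨c, hc⟩ := torus_liouville L (addH L y) (fun l hl x hx => addH_per L hl hx)
      (addH_local L hy)
    exact ⟨c, fun x hx hxy => hc x (addH_analyticAt L hx hxy).continuousAt⟩
  have anti : ∀ x y, addH L y x = - addH L x y := by
    intro x y
    simp only [addH, add_comm y x]; ring
  have hcount : ({z | z ∈ L.lattice} ∪ {z | z + y ∈ L.lattice} ∪ {z | z + z ∈ L.lattice}).Countable := by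
    have h0 := countable_lattice L
    refine (h0.union ?_).union ?_
    · exact h0.preimage (f := fun z => z + y) (add_left_injective y)
    · refine h0.preimage (f := fun z => z + z) fun a b h => ?_
      have : a + a = b + b := h
      linear_combination this / 2
  obtain ⟨z, hz⟩ := exists_notMem_of_countable hcount
  simp only [Set.mem_union, Set.mem_ofPred_eq, not_or] at hz
  obtain ⟨⟨hz1, hz2⟩, hz3⟩ := hz
  obtain ⟨c, hc⟩ := key z hz1
  have c0 : c = 0 := by
    have h1 := hc z hz1 hz3
    have h2 := anti z z
    rw [h1] at h2
    linear_combination h2 / 2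
  obtain ⟨d, hd⟩ := key y hy
  rw [hd x hx hxy, ← hd z hz1 hz2, anti, hc y hy (by rwa [add_comm]), c0, neg_zero]

/-! ### The functions of the statement in terms of period pairs -/

section Sigma

/-- The Weierstrass primary factor of order two is `1 + O(u³)`. -/
lemma primary_factor_bound (u : ℂ) (hu : ‖u‖ ≤ 1) :
    ‖(1 - u) * Complex.exp (u + u ^ 2 / 2) - 1‖ ≤ Real.exp 2 * ‖u‖ ^ 3 := by
  have hd : ∀ x : ℂ, HasDerivAt (fun v : ℂ => (1 - v) * Complex.exp (v + v ^ 2 / 2))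
      (-x ^ 2 * Complex.exp (x + x ^ 2 / 2)) x := by
    intro x
    have h1 : HasDerivAt (fun v : ℂ => v + v ^ 2 / 2) (1 + x) x := by
      convert! (hasDerivAt_id x).add (((hasDerivAt_id x).pow 2).div_const 2) using 1
      simp
    convert! ((hasDerivAt_id x).const_sub 1).mul h1.cexp using 1
    simp only [id]
    ring
  have := Convex.norm_image_sub_le_of_norm_hasDerivWithin_le (s := Metric.closedBall (0 : ℂ) ‖u‖)
    (C := Real.exp 2 * ‖u‖ ^ 2) (x := 0) (y := u) (fun x _ => (hd x).hasDerivWithinAt)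
    (fun x hx => ?_) (convex_closedBall _ _) (by simp) (by simp)
  · simpa [pow_succ, mul_assoc] using this
  have hx' : ‖x‖ ≤ ‖u‖ := by simpa using hx
  rw [norm_mul, norm_neg, norm_pow, mul_comm]
  gcongr
  rw [Complex.norm_exp]
  apply Real.exp_le_exp.mpr
  refine (Complex.re_le_norm _).trans ((norm_add_le _ _).trans ?_)
  have h1 : ‖x‖ ≤ 1 := hx'.trans hu
  have h2 : ‖x ^ 2 / 2‖ ≤ 1 := by
    rw [norm_div, norm_pow]
    simp only [Complex.norm_ofNat]
    nlinarith [norm_nonneg x]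
  linarith

/-- The period pair of a lattice basis. -/
def PP {ω₁ ω₂ : ℂ} (h : IsLatticeBasis ω₁ ω₂) : PeriodPair := ⟨ω₁, ω₂, h⟩

variable {ω₁ ω₂ : ℂ}

lemma mem_PP (h : IsLatticeBasis ω₁ ω₂) (z : ℂ) : z ∈ (PP h).lattice ↔ z ∈ LatticePts ω₁ ω₂ := by
  rw [(PP h).mem_lattice]
  simp only [LatticePts, Set.mem_ofPred_eq, PP, eq_comm]

/-- Inclusion of the nonzero lattice points into the lattice. -/
def incl' (h : IsLatticeBasis ω₁ ω₂) (w : LatticePts' ω₁ ω₂) : (PP h).lattice :=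
  ⟨w, (mem_PP h _).mpr w.2.1⟩

lemma incl'_inj (h : IsLatticeBasis ω₁ ω₂) : Function.Injective (incl' h) := by
  intro a b hab
  exact Subtype.ext (congrArg (fun x : (PP h).lattice => (x : ℂ)) hab)

lemma tsum_incl' (h : IsLatticeBasis ω₁ ω₂) (F : ℂ → ℂ) (hF : F 0 = 0) :
    ∑' w : LatticePts' ω₁ ω₂, F w = ∑' l : (PP h).lattice, F l := by
  refine (incl'_inj h).tsum_eq (f := fun l : (PP h).lattice => F l) ?_
  intro l hl
  have : (l : ℂ) ≠ 0 := by
    intro h0; apply hl; simp [h0, hF]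
  exact ⟨⟨l, (mem_PP h _).mp l.2, this⟩, rfl⟩

lemma g2_eq (h : IsLatticeBasis ω₁ ω₂) : g2 ω₁ ω₂ = (PP h).g₂ := by
  simp only [g2, PeriodPair.g₂, PeriodPair.G]
  rw [tsum_incl' h (fun w => (w ^ 4)⁻¹) (by simp)]

lemma g3_eq (h : IsLatticeBasis ω₁ ω₂) : g3 ω₁ ω₂ = (PP h).g₃ := by
  simp only [g3, PeriodPair.g₃, PeriodPair.G]
  rw [tsum_incl' h (fun w => (w ^ 6)⁻¹) (by simp)]

/-- A factor of the sigma product. -/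
def sFac (w z : ℂ) : ℂ := (1 - z / w) * Complex.exp (z / w + z ^ 2 / (2 * w ^ 2))

lemma sFac_diff (w : ℂ) : Differentiable ℂ (sFac w) := by
  unfold sFac; fun_prop

lemma sFac_ne {w z : ℂ} (hw : w ≠ 0) (h : z ≠ w) : sFac w z ≠ 0 := by
  refine mul_ne_zero ?_ (Complex.exp_ne_zero _)
  rw [sub_ne_zero]
  intro h1
  exact h ((eq_div_iff hw).mp h1 ▸ (one_mul w))

lemma sFac_logDeriv {w z : ℂ} (hw : w ≠ 0) (h : z ≠ w) :
    logDeriv (sFac w) z = 1 / (z - w) + 1 / w + z / w ^ 2 := by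
  have h1 : HasDerivAt (fun z : ℂ => z / w + z ^ 2 / (2 * w ^ 2)) (1 / w + z / w ^ 2) z := by
    convert! ((hasDerivAt_id z).div_const w).add (((hasDerivAt_id z).pow 2).div_const (2 * w ^ 2))
      using 1
    simp; field_simp
  have h2 := (((hasDerivAt_id z).div_const w).const_sub 1).mul h1.cexp
  have h3 : deriv (sFac w) z = _ := h2.deriv
  rw [logDeriv_apply, h3, sFac]
  have h4 : z - w ≠ 0 := sub_ne_zero.mpr h
  have h5 : w - z ≠ 0 := sub_ne_zero.mpr h.symm
  have h6 := Complex.exp_ne_zero (z / w + z ^ 2 / (2 * w ^ 2))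
  have h7 : 1 - z / w = (w - z) / w := by field_simp
  simp only [id, h7]
  generalize Complex.exp (z / w + z ^ 2 / (2 * w ^ 2)) = E at *
  have h8 : z - w = -(w - z) := by ring
  rw [h8]
  field_simp
  ring

lemma sFac_bound (r : ℝ) (w z : ℂ) (hz : ‖z‖ < r) (hw : r ≤ ‖w‖) :
    ‖sFac w z - 1‖ ≤ Real.exp 2 * r ^ 3 * ‖w‖ ^ (-3 : ℝ) := by
  have hr : 0 < r := (norm_nonneg z).trans_lt hz
  have hw0 : 0 < ‖w‖ := hr.trans_le hw
  have := primary_factor_bound (z / w) (by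
    rw [norm_div]; exact (div_le_one hw0).mpr (hz.le.trans hw))
  have e : z / w + (z / w) ^ 2 / 2 = z / w + z ^ 2 / (2 * w ^ 2) := by
    rw [div_pow, div_div, mul_comm]
  rw [e] at this
  refine this.trans ?_
  rw [norm_div, div_pow]
  have e2 : ‖w‖ ^ (-3 : ℝ) = (‖w‖ ^ 3)⁻¹ := by norm_cast
  rw [e2, mul_assoc, ← div_eq_mul_inv]
  gcongr

lemma summable_incl' (h : IsLatticeBasis ω₁ ω₂) :
    Summable fun w : LatticePts' ω₁ ω₂ => ‖(w : ℂ)‖ ^ (-3 : ℝ) := by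
  have key : ∀ L : PeriodPair, Summable fun l : L.lattice => ‖(l : ℂ)‖ ^ (-3 : ℝ) := fun L =>
    ZLattice.summable_norm_rpow L.lattice (-3) (by simp; norm_num)
  have h2 := (key (PP h)).comp_injective (incl'_inj h)
  refine h2.congr fun w => ?_
  simp only [Function.comp_apply, incl']

lemma eventually_incl' (h : IsLatticeBasis ω₁ ω₂) (r : ℝ) (hr : 0 < r) :
    ∀ᶠ w : LatticePts' ω₁ ω₂ in cofinite, r ≤ ‖(w : ℂ)‖ := by
  have h1 := (summable_incl' h).tendsto_cofinite_zero
  have h2 : (0 : ℝ) < r ^ (-3 : ℝ) := by positivity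
  filter_upwards [h1.eventually_lt_const h2] with w hw
  by_contra! hlt
  have hw0 : 0 < ‖(w : ℂ)‖ := norm_pos_iff.mpr w.2.2
  have := Real.rpow_le_rpow_of_nonpos hw0 hlt.le (by norm_num : (-3 : ℝ) ≤ 0)
  linarith

theorem wZeta_eq (h : IsLatticeBasis ω₁ ω₂) {z : ℂ} (hz : z ∉ (PP h).lattice) :
    wZeta ω₁ ω₂ z = zt (PP h) z := by
  have hz0 : z ≠ 0 := by rintro rfl; exact hz (zero_mem _)
  set r : ℝ := ‖z‖ + 1 with hr
  have hr0 : 0 < r := by positivity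
  have hzr : z ∈ Metric.ball (0 : ℂ) r := by simp [hr]
  have hne : ∀ w : LatticePts' ω₁ ω₂, z ≠ w := by
    rintro w rfl; exact hz ((mem_PP h _).mpr w.2.1)
  have hsum := (summable_incl' h).mul_left (Real.exp 2 * r ^ 3)
  have hM : MultipliableLocallyUniformlyOn (fun (w : LatticePts' ω₁ ω₂) z => sFac w z)
      (Metric.ball 0 r) := by
    have := Summable.multipliableLocallyUniformlyOn_one_add (f := fun (w : LatticePts' ω₁ ω₂) z =>
      sFac w z - 1) (K := Metric.ball (0 : ℂ) r) Metric.isOpen_ball hsum ?_ ?_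
    · simpa using this
    · filter_upwards [eventually_incl' h r hr0] with w hw x hx
      exact sFac_bound r w x (by simpa using hx) hw
    · intro w
      exact ((sFac_diff w).continuous.sub continuous_const).continuousOn
  have hnz : ∏' w : LatticePts' ω₁ ω₂, sFac w z ≠ 0 := by
    have := tprod_one_add_ne_zero_of_summable (f := fun w : LatticePts' ω₁ ω₂ => sFac w z - 1)
      (fun w => by simpa using sFac_ne w.2.2 (hne w)) ?_
    · simpa using this
    · refine Summable.of_norm_bounded_eventually hsum ?_
      filter_upwards [eventually_incl' h r hr0] with w hw
      rw [norm_norm]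
      exact sFac_bound r w z (by simpa using hzr) hw
  have hdiff : DifferentiableAt ℂ (fun z => ∏' w : LatticePts' ω₁ ω₂, sFac w z) z := by
    have h1 := hasProdLocallyUniformlyOn_iff_tendstoLocallyUniformlyOn.mp
      hM.hasProdLocallyUniformlyOn
    refine (h1.differentiableOn (.of_forall fun s => ?_) Metric.isOpen_ball).differentiableAt
      (Metric.isOpen_ball.mem_nhds hzr)
    exact (Differentiable.fun_finsetProd (f := fun (w : LatticePts' ω₁ ω₂) z => sFac w z)
      fun w _ => sFac_diff w).differentiableOn
  have hls : Summable fun w : LatticePts' ω₁ ω₂ => logDeriv (sFac w) z := by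
    have := (summable_zt (PP h) z).comp_injective (incl'_inj h)
    refine this.congr fun w => ?_
    rw [sFac_logDeriv w.2.2 (hne w)]; rfl
  have hld := logDeriv_tprod_eq_tsum Metric.isOpen_ball hzr
    (fun w : LatticePts' ω₁ ω₂ => sFac_ne w.2.2 (hne w))
    (fun w => (sFac_diff w).differentiableOn) hls hM hnz
  have h1 : wZeta ω₁ ω₂ z = logDeriv (fun z => z * ∏' w : LatticePts' ω₁ ω₂, sFac w z) z := rfl
  rw [h1, logDeriv_mul (f := fun z => z) z hz0 hnz differentiableAt_id hdiff, hld, zt_eq]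
  congr 1
  · simp [logDeriv_apply]
  · rw [ztE, ← tsum_incl' h (fun l => if l = 0 then 0 else (1 / (z - l) + 1 / (l : ℂ) + z / l ^ 2))
      (by simp)]
    refine tsum_congr fun w => ?_
    rw [sFac_logDeriv w.2.2 (hne w), if_neg w.2.2]

theorem wP_eq (h : IsLatticeBasis ω₁ ω₂) {z : ℂ} (hz : z ∉ (PP h).lattice) :
    wP ω₁ ω₂ z = ℘[PP h] z := by
  have : wZeta ω₁ ω₂ =ᶠ[𝓝 z] zt (PP h) := by
    filter_upwards [(PP h).isClosed_lattice.isOpen_compl.mem_nhds hz] with x hx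
    exact wZeta_eq h hx
  rw [wP, this.deriv_eq, (hasDerivAt_zt _ hz).deriv, neg_neg]

end Sigma

/-! ### Zeros of `℘'` and the three addition theorems -/

/-- `℘'` has a pole at `0`, hence is not identically zero. -/
lemma wp'_not_zero (L : PeriodPair) : ¬ ∀ z, z ∉ L.lattice → ℘'[L] z = 0 := by
  intro H
  have hQ : ContinuousAt (L.derivWeierstrassPExcept 0) 0 :=
    (L.analyticAt_derivWeierstrassPExcept 0).continuousAt
  have h1 : Tendsto (fun z : ℂ => z ^ 3 * L.derivWeierstrassPExcept 0 z) (𝓝[≠] 0)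
      (𝓝 (0 ^ 3 * L.derivWeierstrassPExcept 0 0)) :=
    ((continuousAt_id.pow 3).mul hQ).tendsto.mono_left nhdsWithin_le_nhds
  have h2 : Tendsto (fun z : ℂ => z ^ 3 * L.derivWeierstrassPExcept 0 z) (𝓝[≠] 0) (𝓝 2) := by
    refine tendsto_const_nhds.congr' ?_
    filter_upwards [eventually_notMem_lattice L 0, self_mem_nhdsWithin] with z hz h0
    have h0 : z ≠ 0 := h0
    have := L.derivWeierstrassPExcept_sub 0 z
    have h3 := H z hz
    simp only [ZeroMemClass.coe_zero, sub_zero] at this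
    rw [h3, sub_eq_zero] at this
    rw [this]; field_simp
  have := tendsto_nhds_unique h1 h2
  norm_num at this

/-- The zeros of `℘'` are points of order two. By the addition theorem, `f = ℘ - ℘(x)` satisfies a
linear differential equation `f' = 2 G f` near a zero `x` of `℘'` with `2x ∉ Ω`; so `f` would vanish
identically near `x`. -/
lemma wp'_ne_zero (L : PeriodPair) {x : ℂ} (hx : 2 * x ∉ L.lattice) : ℘'[L] x ≠ 0 := by
  intro h0
  have hx1 : x ∉ L.lattice := fun h => hx (by rw [two_mul]; exact add_mem h h)
  set f : ℂ → ℂ := fun z => ℘[L] z - ℘[L] x with hf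
  set G : ℂ → ℂ := fun z => 2 * (zt L (z + x) - zt L x - zt L z) with hG
  have hfa : AnalyticAt ℂ f x := (analyticAt_wp L hx1).sub analyticAt_const
  have hxx : x + x ∉ L.lattice := by rwa [← two_mul]
  have hGa : AnalyticAt ℂ G x := by
    have h4 : AnalyticAt ℂ (fun z => zt L (z + x)) x :=
      (analyticAt_zt L hxx).comp (f := fun z => z + x) (by fun_prop)
    exact analyticAt_const.mul ((h4.sub analyticAt_const).sub (analyticAt_zt L hx1))
  have hcl := L.isClosed_lattice.isOpen_compl
  have e1 : ∀ᶠ z in 𝓝 x, z ∉ L.lattice := hcl.mem_nhds hx1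
  have e2 : ∀ᶠ z in 𝓝 x, z + x ∉ L.lattice :=
    ((continuous_add_const x).tendsto x).eventually (hcl.mem_nhds hxx)
  have hd : deriv f =ᶠ[𝓝 x] G * f := by
    filter_upwards [e1, e2] with z hz hzx
    rw [((hasDerivAt_wp L hz).sub_const _).deriv]
    have := zt_add L hz hx1 hzx
    rw [h0] at this
    simp only [hG, hf, Pi.mul_apply]; linear_combination -2 * this
  have o1 := hfa.analyticOrderAt_deriv_add_one
  have o2 : (f · - f x) = f := by ext z; simp [hf]
  rw [o2, analyticOrderAt_congr hd, analyticOrderAt_mul hGa hfa] at o1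
  have htop : analyticOrderAt f x = ⊤ := by
    by_contra hne
    generalize analyticOrderAt G x = c at o1
    lift analyticOrderAt f x to ℕ using hne with a
    cases c with
    | top => simp at o1
    | coe c => norm_cast at o1; omega
  have hz : ∀ᶠ z in 𝓝 x, ℘'[L] z = 0 := by
    filter_upwards [hd, e1, analyticOrderAt_eq_top.mp htop] with z h1 hz h2
    rw [← ((hasDerivAt_wp L hz).sub_const (℘[L] x)).deriv]
    change deriv f z = 0
    rw [h1, Pi.mul_apply, h2, mul_zero]
  refine wp'_not_zero L fun z hz' => ?_
  have hconn : IsPreconnected ((L.lattice : Set ℂ)ᶜ) :=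
    ((countable_lattice L).isConnected_compl_of_one_lt_rank (by simp)).isPreconnected
  exact (L.analyticOnNhd_derivWeierstrassP).eqOn_zero_of_preconnected_of_eventuallyEq_zero
    hconn (show x ∈ (L.lattice : Set ℂ)ᶜ from hx1) hz hz'

lemma wp_ne (L : PeriodPair) {x y : ℂ} (hx : x ∉ L.lattice) (hy : 2 * y ∉ L.lattice)
    (hxy : x + y ∉ L.lattice) (hxy' : x - y ∉ L.lattice) : ℘[L] x - ℘[L] y ≠ 0 := by
  intro h
  have hy1 : y ∉ L.lattice := fun h => hy (by rw [two_mul]; exact add_mem h h)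
  have h1 := zt_add L hx hy1 hxy
  have h2 := zt_add L hx (y := -y) (by rwa [neg_notMem]) (by rwa [← sub_eq_add_neg])
  rw [L.weierstrassP_neg, L.derivWeierstrassP_neg] at h2
  rw [h] at h1 h2
  exact wp'_ne_zero L hy (by linear_combination h1 - h2)

lemma two_mul_mem (L : PeriodPair) {x : ℂ} (hx : x ∈ L.lattice) : 2 * x ∈ L.lattice := by
  rw [two_mul]; exact add_mem hx hx

lemma hasDerivAt_wp'' (L : PeriodPair) {x : ℂ} (hx : 2 * x ∉ L.lattice) :
    HasDerivAt L.derivWeierstrassP (6 * ℘[L] x ^ 2 - L.g₂ / 2) x := by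
  have hx1 : x ∉ L.lattice := fun h => hx (two_mul_mem L h)
  have h0 := wp'_ne_zero L hx
  have hd := (hasDerivAt_wp' L hx1).hasDerivAt
  have hu := hasDerivAt_wp L hx1
  have h1 := hd.pow 2
  have h2 := (((hu.pow 3).const_mul 4).sub (hu.const_mul L.g₂)).sub_const L.g₃
  have e : (L.derivWeierstrassP ^ 2) =ᶠ[𝓝 x]
      fun z => 4 * (L.weierstrassP ^ 3) z - L.g₂ * L.weierstrassP z - L.g₃ := by
    filter_upwards [L.isClosed_lattice.isOpen_compl.mem_nhds hx1] with z hz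
    exact L.derivWeierstrassP_sq z hz
  have h3 := h1.unique (h2.congr_of_eventuallyEq e)
  have h4 : deriv L.derivWeierstrassP x = 6 * ℘[L] x ^ 2 - L.g₂ / 2 := by
    refine mul_left_cancel₀ h0 ?_
    norm_num at h3
    linear_combination (1/2) * h3
  rwa [h4] at hd

/-- The addition theorems of `ζ`, `℘` and `℘'`. Here `A = (℘'(x) - ℘'(y)) / 2(℘(x) - ℘(y))` and
`Ax` is its derivative with respect to `x`. -/
lemma add_thms (L : PeriodPair) {x y : ℂ} (hx : 2 * x ∉ L.lattice) (hy : 2 * y ∉ L.lattice)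
    (hxy : x + y ∉ L.lattice) (hxy' : x - y ∉ L.lattice) {A Ax : ℂ}
    (hA : A * (2 * (℘[L] x - ℘[L] y)) = ℘'[L] x - ℘'[L] y)
    (hAx : Ax * (2 * (℘[L] x - ℘[L] y)) = (6 * ℘[L] x ^ 2 - L.g₂ / 2) - 2 * A * ℘'[L] x) :
    zt L (x + y) = zt L x + zt L y + A ∧ ℘[L] (x + y) = ℘[L] x - Ax ∧
      ℘'[L] (x + y) = 2 * A * Ax - ℘'[L] x := by
  have hx1 : x ∉ L.lattice := fun h => hx (two_mul_mem L h)
  have hy1 : y ∉ L.lattice := fun h => hy (two_mul_mem L h)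
  have hne := wp_ne L hx1 hy hxy hxy'
  let F : ℂ → ℂ := fun z => (℘'[L] z - ℘'[L] y) / (2 * (℘[L] z - ℘[L] y))
  let U : Set ℂ := {z | 2 * z ∉ L.lattice ∧ z + y ∉ L.lattice ∧ z - y ∉ L.lattice}
  have hcl := L.isClosed_lattice.isOpen_compl
  have hU : IsOpen U := by
    refine IsOpen.inter (hcl.preimage (f := fun z => 2 * z) (by fun_prop)) ?_
    exact (hcl.preimage (f := fun z => z + y) (by fun_prop)).inter
      (hcl.preimage (f := fun z => z - y) (by fun_prop))
  have hxU : x ∈ U := ⟨hx, hxy, hxy'⟩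
  have U1 : ∀ z ∈ U, z ∉ L.lattice := fun z hz h => hz.1 (two_mul_mem L h)
  have Une : ∀ z ∈ U, ℘[L] z - ℘[L] y ≠ 0 := fun z hz => wp_ne L (U1 z hz) hy hz.2.1 hz.2.2
  have hz1 : ∀ z ∈ U, zt L (z + y) = zt L z + zt L y + F z := by
    intro z hz
    have h1 := zt_add L (U1 z hz) hy1 hz.2.1
    have h2 := Une z hz
    simp only [F]
    field_simp
    linear_combination 2 * h1
  have hF : ∀ z ∈ U, HasDerivAt F (((6 * ℘[L] z ^ 2 - L.g₂ / 2) - 2 * F z * ℘'[L] z) /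
      (2 * (℘[L] z - ℘[L] y))) z := by
    intro z hz
    have h2 := Une z hz
    have := ((hasDerivAt_wp'' L hz.1).sub_const (℘'[L] y)).div
      (((hasDerivAt_wp L (U1 z hz)).sub_const (℘[L] y)).const_mul 2) (mul_ne_zero two_ne_zero h2)
    convert! this using 1
    simp only [F]
    field_simp
  have hz2 : ∀ z ∈ U, ℘[L] (z + y) = F z ^ 2 - ℘[L] z - ℘[L] y := by
    intro z hz
    have h2 := Une z hz
    have d1 := ((hasDerivAt_wp L (U1 z hz)))
    have d2 := (((hasDerivAt_zt L (U1 z hz)).add_const (zt L y)).add (hF z hz))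
    have d3 := (hasDerivAt_zt L hz.2.1).comp_add_const z y
    have e : (fun z => zt L (z + y)) =ᶠ[𝓝 z] ((fun x => zt L x + zt L y) + F) := by
      filter_upwards [hU.mem_nhds hz] with w hw using hz1 w hw
    have h3 := d3.unique (d2.congr_of_eventuallyEq e)
    have h4 := L.derivWeierstrassP_sq z (U1 z hz)
    have h5 := L.derivWeierstrassP_sq y hy1
    rw [neg_eq_iff_eq_neg] at h3
    rw [h3]
    simp only [F]
    field_simp
    linear_combination h4 - h5
  have hz3 : ∀ z ∈ U, ℘'[L] (z + y) = 2 * F z * (((6 * ℘[L] z ^ 2 - L.g₂ / 2) -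
      2 * F z * ℘'[L] z) / (2 * (℘[L] z - ℘[L] y))) - ℘'[L] z := by
    intro z hz
    have d1 := hasDerivAt_wp L (U1 z hz)
    have d2 := (((hF z hz).pow 2).sub d1).sub_const (℘[L] y)
    have d3 := (hasDerivAt_wp L hz.2.1).comp_add_const z y
    have e : (fun z => ℘[L] (z + y)) =ᶠ[𝓝 z] (fun x => (F ^ 2 - L.weierstrassP) x - ℘[L] y) := by
      filter_upwards [hU.mem_nhds hz] with w hw using hz2 w hw
    have h3 := d3.unique (d2.congr_of_eventuallyEq e)
    rw [h3]; norm_num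
  have hFA : F x = A := by
    simp only [F]; rw [div_eq_iff (mul_ne_zero two_ne_zero hne), hA]
  have hFx : ((6 * ℘[L] x ^ 2 - L.g₂ / 2) - 2 * A * ℘'[L] x) / (2 * (℘[L] x - ℘[L] y)) = Ax := by
    rw [div_eq_iff (mul_ne_zero two_ne_zero hne), hAx]
  refine ⟨by rw [hz1 x hxU, hFA], ?_, by rw [hz3 x hxU, hFA, hFx]⟩
  rw [hz2 x hxU, hFA]
  have h4 := L.derivWeierstrassP_sq x hx1
  have h5 := L.derivWeierstrassP_sq y hy1
  rw [← hFx, ← hFA]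
  simp only [F]
  field_simp
  linear_combination h5 - h4

/-! ### Derivations and generic additivity -/

lemma exists_generic {B : Set ℂ} (hB : B.Countable) {C : Set ℂ} (hC : C.Countable) :
    ∃ v, ∀ c ∈ C, v + c ∉ B := by
  obtain ⟨v, hv⟩ := exists_notMem_of_countable (hC.biUnion fun c _ =>
    hB.preimage (f := fun v : ℂ => v + c) (add_left_injective c))
  refine ⟨v, fun c hc hb => hv ?_⟩
  simp only [Set.mem_iUnion]
  exact ⟨c, hc, hb⟩

/-- A function which is additive outside a countable symmetric exceptional set agrees, outside that
set, with an additive function: put `g x = f (x + w) - f w` with `w` generic. -/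
lemma exists_additive_extension {B : Set ℂ} (hB : B.Countable) (hneg : ∀ x, -x ∈ B → x ∈ B)
    {f : ℂ → ℂ} (hf : ∀ x y, x ∉ B → y ∉ B → x + y ∉ B → x - y ∉ B → f (x + y) = f x + f y) :
    ∃ g : ℂ →+ ℂ, (∀ x w, w ∉ B → x + w ∉ B → g x = f (x + w) - f w) ∧
      ∀ x, x ∉ B → g x = f x := by
  have hn : ∀ x y, x - y ∉ B → y - x ∉ B := fun x y h h' => h (hneg _ (by rwa [neg_sub]))
  have indep : ∀ x w w', w ∉ B → x + w ∉ B → w' ∉ B → x + w' ∉ B →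
      f (x + w) - f w = f (x + w') - f w' := by
    intro x w w' h1 h2 h3 h4
    obtain ⟨v, hv⟩ := exists_generic hB (C := {0, x + w, -(x + w), w, -w, w - w',
      -(x + 2 * w' - w), -(2 * w' - w)}) (by simp)
    simp only [Set.mem_insert_iff, Set.mem_singleton_iff, forall_eq_or_imp, forall_eq, add_zero,
      ← sub_eq_add_neg] at hv
    obtain ⟨v1, v2, v3, v4, v5, v6, v7, v8⟩ := hv
    have a1 := hf (x + w) v h2 v1 (by rwa [add_comm]) (hn _ _ v3)
    have a2 := hf w v h1 v1 (by rwa [add_comm]) (hn _ _ v5)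
    have a3 := hf (x + w') (v + (w - w')) h4 v6 (by convert v2 using 2; ring)
      (hn _ _ (by convert v7 using 2; ring))
    have a4 := hf w' (v + (w - w')) h3 v6 (by convert v4 using 2; ring)
      (hn _ _ (by convert v8 using 2; ring))
    have e1 : x + w' + (v + (w - w')) = x + w + v := by ring
    have e2 : w' + (v + (w - w')) = w + v := by ring
    rw [e1] at a3; rw [e2] at a4
    linear_combination a2 - a1 + a3 - a4
  have hw : ∀ x, ∃ w, w ∉ B ∧ x + w ∉ B := by
    intro x
    obtain ⟨v, hv⟩ := exists_generic hB (C := {0, x}) (by simp)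
    exact ⟨v, by simpa using hv 0 (by simp), by rw [add_comm]; exact hv x (by simp)⟩
  choose W hW1 hW2 using hw
  have key : ∀ x w, w ∉ B → x + w ∉ B → f (x + W x) - f (W x) = f (x + w) - f w :=
    fun x w h1 h2 => indep _ _ _ (hW1 x) (hW2 x) h1 h2
  refine ⟨AddMonoidHom.mk' (fun x => f (x + W x) - f (W x)) ?_, key, ?_⟩
  · intro x y
    obtain ⟨v, hv⟩ := exists_generic hB (C := {0, y, x + y}) (by simp)
    simp only [Set.mem_insert_iff, Set.mem_singleton_iff, forall_eq_or_imp, forall_eq,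
      add_zero] at hv
    obtain ⟨v1, v2, v3⟩ := hv
    have e1 : y + v ∉ B := by rwa [add_comm]
    have e2 : x + (y + v) ∉ B := by convert v3 using 2; ring
    have e3 : x + y + v ∉ B := by rwa [add_assoc]
    rw [key _ v v1 e3, key x _ e1 e2, key y v v1 e1, add_assoc]
    ring
  · intro x hx
    obtain ⟨v, hv⟩ := exists_generic hB (C := {0, x, -x}) (by simp)
    simp only [Set.mem_insert_iff, Set.mem_singleton_iff, forall_eq_or_imp, forall_eq,
      add_zero, ← sub_eq_add_neg] at hv
    obtain ⟨v1, v2, v3⟩ := hv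
    have e : x + v ∉ B := by rwa [add_comm]
    change f (x + W x) - f (W x) = f x
    rw [key x v v1 e, hf x v hx v1 e (hn _ _ v3)]
    ring

lemma derivation_algebraic (D : Derivation ℚ ℂ ℂ) {x : ℂ} (hx : IsAlgebraic ℚ x) : D x = 0 := by
  have hi := hx.isIntegral
  have h1 := D.map_aeval (minpoly ℚ x) x
  rw [minpoly.aeval, map_zero] at h1
  have h2 := (minpoly.irreducible hi).separable.aeval_derivative_ne_zero (minpoly.aeval ℚ x)
  exact (smul_eq_zero.mp h1.symm).resolve_left h2

/-- The exceptional set: points whose double is a period. -/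
def halfPts (L : PeriodPair) : Set ℂ := {x | 2 * x ∈ L.lattice}

lemma countable_halfPts (L : PeriodPair) : (halfPts L).Countable :=
  (countable_lattice L).preimage (f := fun x : ℂ => 2 * x) (mul_right_injective₀ two_ne_zero)

lemma isAlgebraic_root {u g₂ g₃ : ℂ} (h2 : IsAlgebraic ℚ g₂) (h3 : IsAlgebraic ℚ g₃)
    (h : 4 * u ^ 3 - g₂ * u - g₃ = 0) : IsAlgebraic ℚ u := by
  let K := algebraicClosure ℚ ℂ
  have : Algebra.IsAlgebraic ℚ K := algebraicClosure.isAlgebraic ℚ ℂ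
  let a : K := ⟨g₂, (mem_algebraicClosure_iff).mpr h2⟩
  let b : K := ⟨g₃, (mem_algebraicClosure_iff).mpr h3⟩
  refine IsAlgebraic.restrictScalars (S := K) ℚ
    ⟨4 * Polynomial.X ^ 3 - Polynomial.C a * Polynomial.X - Polynomial.C b, ?_, ?_⟩
  · intro h0
    have := congrArg (fun q => Polynomial.coeff q 3) h0
    simp [Polynomial.coeff_ofNat_mul] at this
  · simp only [map_sub, map_mul, map_pow, Polynomial.aeval_X, Polynomial.aeval_C, map_ofNat]
    exact h

/-! ### The action of a derivation on elliptic functions -/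

/-- A derivation `D` of `ℂ` killing the invariants acts on the values of `℘` and `ζ` as follows:
there are additive maps `g`, `μ`, with `g` vanishing on the lattice, such that
`D(℘(x)) = ℘'(x) g(x)` and `D(ζ(x)) = μ(x) - ℘(x) g(x)`. (If `D` came from an infinitesimal
deformation of the argument, `g` would be `D` itself and `μ` zero.) -/
theorem exists_g_mu (L : PeriodPair) (h2 : IsAlgebraic ℚ L.g₂) (h3 : IsAlgebraic ℚ L.g₃)
    (D : Derivation ℚ ℂ ℂ) : ∃ g μ : ℂ →+ ℂ, (∀ l ∈ L.lattice, g l = 0) ∧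
      ∀ x, x ∉ L.lattice → D (℘[L] x) = ℘'[L] x * g x ∧ D (zt L x) + ℘[L] x * g x = μ x := by
  set B := halfPts L with hBdef
  have hB := countable_halfPts L
  have hBneg : ∀ x, -x ∈ B → x ∈ B := fun x hx => by
    change 2 * x ∈ L.lattice
    rw [← neg_notMem, ← mul_neg]; exact hx
  have hBsub : ∀ x, x ∉ B → x ∉ L.lattice := fun x hx h => hx (two_mul_mem L h)
  have hBl : ∀ x l, l ∈ L.lattice → x ∉ B → x + l ∉ B := fun x l hl hx h => by
    refine hx ?_
    change 2 * (x + l) ∈ L.lattice at h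
    rw [mul_add] at h
    exact (add_notMem L (two_mul_mem L hl)).mp h
  let lam : ℂ → ℂ := fun x => D (℘[L] x) / ℘'[L] x
  have hlam : ∀ x, x ∉ B → D (℘[L] x) = ℘'[L] x * lam x := fun x hx => by
    have := wp'_ne_zero L hx
    simp only [lam]; field_simp
  have hlam' : ∀ x, x ∉ B → D (℘'[L] x) = (6 * ℘[L] x ^ 2 - L.g₂ / 2) * lam x := fun x hx => by
    have h0 := wp'_ne_zero L hx
    have h1 := congrArg D (L.derivWeierstrassP_sq x (hBsub x hx))
    have e4 : D (4 : ℂ) = 0 := by exact_mod_cast D.map_natCast 4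
    simp only [map_sub, Derivation.leibniz, Derivation.leibniz_pow, hlam x hx, e4,
      derivation_algebraic D h2, derivation_algebraic D h3, smul_eq_mul, nsmul_eq_mul] at h1
    refine mul_left_cancel₀ h0 ?_
    norm_num at h1
    linear_combination (1/2) * h1
  have main : ∀ x y, x ∉ B → y ∉ B → x + y ∉ B → x - y ∉ B → lam (x + y) = lam x + lam y ∧
      D (zt L (x + y)) + ℘[L] (x + y) * lam (x + y) =
        (D (zt L x) + ℘[L] x * lam x) + (D (zt L y) + ℘[L] y * lam y) := by
    intro x y hx hy hxy hxy'
    have hne := wp_ne L (hBsub x hx) hy (hBsub _ hxy) (hBsub _ hxy')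
    have hne2 : 2 * (℘[L] x - ℘[L] y) ≠ 0 := mul_ne_zero two_ne_zero hne
    obtain ⟨A, hA⟩ : ∃ A, A * (2 * (℘[L] x - ℘[L] y)) = ℘'[L] x - ℘'[L] y :=
      ⟨_, div_mul_cancel₀ _ hne2⟩
    obtain ⟨Ax, hAx⟩ : ∃ Ax, Ax * (2 * (℘[L] x - ℘[L] y)) =
      (6 * ℘[L] x ^ 2 - L.g₂ / 2) - 2 * A * ℘'[L] x := ⟨_, div_mul_cancel₀ _ hne2⟩
    obtain ⟨Ay, hAy⟩ : ∃ Ay, Ay * (2 * (℘[L] x - ℘[L] y)) =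
      2 * A * ℘'[L] y - (6 * ℘[L] y ^ 2 - L.g₂ / 2) := ⟨_, div_mul_cancel₀ _ hne2⟩
    obtain ⟨t1, t2, t3⟩ := add_thms L hx hy (hBsub _ hxy) (hBsub _ hxy') hA hAx
    obtain ⟨s1, s2, s3⟩ := add_thms L hy hx (x := y) (y := x) (by rw [add_comm]; exact hBsub _ hxy)
      (fun h => hBsub _ hxy' (by rwa [← neg_notMem, neg_sub])) (A := A) (Ax := Ay)
      (by linear_combination -hA) (by linear_combination - hAy)
    rw [add_comm y x] at s1 s2 s3
    have dA : D A = Ax * lam x + Ay * lam y := by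
      have h1 := congrArg D hA
      have e2 : D (2 : ℂ) = 0 := by exact_mod_cast D.map_natCast 2
      simp only [map_sub, Derivation.leibniz, hlam x hx, hlam y hy, hlam' x hx, hlam' y hy, e2,
        smul_eq_mul] at h1
      refine mul_left_cancel₀ hne2 ?_
      linear_combination h1 - hAx * lam x - hAy * lam y
    have hA2 : ℘[L] (x + y) = A ^ 2 - ℘[L] x - ℘[L] y := by
      have h4 := L.derivWeierstrassP_sq x (hBsub x hx)
      have h5 := L.derivWeierstrassP_sq y (hBsub y hy)
      refine mul_left_cancel₀ (mul_ne_zero hne2 hne2) ?_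
      rw [t2]
      linear_combination (-2 * (℘[L] x - ℘[L] y)) * hAx + h4 - h5 -
        (A * (2 * (℘[L] x - ℘[L] y)) - ℘'[L] x - ℘'[L] y) * hA
    have hl : lam (x + y) = lam x + lam y := by
      have h1 := hlam _ hxy
      have h0 := wp'_ne_zero L hxy
      have h6 := congrArg D hA2
      simp only [map_sub, Derivation.leibniz_pow, hlam x hx, hlam y hy, dA, h1, smul_eq_mul,
        nsmul_eq_mul] at h6
      norm_num at h6
      refine mul_left_cancel₀ h0 ?_
      linear_combination h6 - lam x * t3 - lam y * s3
    refine ⟨hl, ?_⟩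
    rw [t1, hl, map_add, map_add, dA]
    linear_combination lam x * t2 + lam y * s2
  obtain ⟨g, hg1, hg2⟩ := exists_additive_extension hB hBneg (f := lam)
    (fun x y a b c d => (main x y a b c d).1)
  obtain ⟨μ, hμ1, hμ2⟩ := exists_additive_extension hB hBneg
    (f := fun x => D (zt L x) + ℘[L] x * lam x) (fun x y a b c d => (main x y a b c d).2)
  obtain ⟨w, hw⟩ := exists_notMem_of_countable hB
  have hlamper : ∀ l ∈ L.lattice, lam (w + l) = lam w := fun l hl => by
    simp only [lam, wp_per L w hl, wp'_per L w hl]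
  have hgl : ∀ l ∈ L.lattice, g l = 0 := fun l hl => by
    have h := hBl w l hl hw
    rw [add_comm] at h
    rw [hg1 l w hw h, add_comm, hlamper l hl, sub_self]
  refine ⟨g, μ, hgl, fun x hx => ?_⟩
  by_cases hxB : x ∈ B
  · have hxl : 2 * x ∈ L.lattice := hxB
    have hgx : g x = 0 := by
      have h := hgl _ hxl
      rw [two_mul, map_add] at h
      linear_combination h / 2
    have hp0 : ℘'[L] x = 0 := by
      have h1 := wp'_per L (-x) hxl
      rw [L.derivWeierstrassP_neg, show -x + 2 * x = x by ring] at h1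
      linear_combination h1 / 2
    have hDp : D (℘[L] x) = 0 := by
      refine derivation_algebraic D (isAlgebraic_root h2 h3 ?_)
      rw [← L.derivWeierstrassP_sq x hx, hp0]; ring
    obtain ⟨c, hc⟩ := quasi_exists L hxl
    have h1 : μ (2 * x) = D c := by
      have h := hBl w _ hxl hw
      rw [add_comm] at h
      rw [hμ1 _ w hw h, add_comm (2 * x) w, hlamper _ hxl, wp_per L w hxl, hc w (hBsub w hw), map_add]
      ring
    have h2 := hc (-x) (by rwa [neg_notMem])
    rw [zt_neg, show -x + 2 * x = x by ring] at h2
    have h3 : c = zt L x + zt L x := by linear_combination -h2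
    rw [two_mul, map_add, h3, map_add] at h1
    refine ⟨by rw [hDp, hp0, zero_mul], ?_⟩
    rw [hgx]
    linear_combination -h1 / 2
  · rw [hg2 x hxB, hμ2 x hxB]
    exact ⟨hlam x hxB, rfl⟩

lemma mu_period (L : PeriodPair) {D : Derivation ℚ ℂ ℂ} {g μ : ℂ →+ ℂ}
    (hg : ∀ l ∈ L.lattice, g l = 0)
    (h : ∀ x, x ∉ L.lattice → D (℘[L] x) = ℘'[L] x * g x ∧ D (zt L x) + ℘[L] x * g x = μ x)
    {l c : ℂ} (hl : l ∈ L.lattice) (hc : ∀ z, z ∉ L.lattice → zt L (z + l) = zt L z + c) :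
    μ l = D c := by
  obtain ⟨w, hw⟩ := exists_notMem_of_countable (countable_lattice L)
  have h1 := (h w hw).2
  have h2 := (h (w + l) (by rwa [SetLike.mem_coe, ← add_notMem L hl] at hw)).2
  rw [wp_per L w hl, hc w hw, map_add, map_add, map_add, hg l hl] at h2
  linear_combination h1 - h2

/-! ### Complex multiplication -/

lemma hasSum_coset (L : PeriodPair) (z u : ℂ) :
    HasSum (fun l : L.lattice => 1 / (z - (u + l)) + 1 / (u + l : ℂ) + z / (u + l : ℂ) ^ 2)
      (zt L (z - u) - zt L (-u) + z * ℘[L] u) := by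
  have h1 := (summable_zt L (z - u)).hasSum
  have h2 := (summable_zt L (-u)).hasSum
  have h3 := (L.hasSum_weierstrassP (-u)).mul_left z
  rw [L.weierstrassP_neg] at h3
  refine ((h1.sub h2).add h3).congr_fun fun l => ?_
  rw [show -u - (l : ℂ) = -(u + l) by ring, show z - u - (l : ℂ) = z - (u + l) by ring, neg_sq,
    div_neg]
  generalize u + (l : ℂ) = a
  ring

lemma zt_zero (L : PeriodPair) : zt L 0 = 0 := by
  have := zt_neg L 0
  rw [neg_zero] at this
  linear_combination this / 2

lemma wp_zero (L : PeriodPair) : ℘[L] 0 = 0 := by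
  simp [weierstrassP]

/-- Multiplication by `α`, where `αΩ ⊆ Ω`, as an endomorphism of the lattice. -/
def mulEnd (L : PeriodPair) (α : ℂ) (h : ∀ l ∈ L.lattice, α * l ∈ L.lattice) :
    L.lattice →ₗ[ℤ] L.lattice where
  toFun l := ⟨α * l, h l l.2⟩
  map_add' x y := by ext; simp [mul_add]
  map_smul' m x := by ext; simp; ring

/-- Complex multiplication formula: `α ζ(αz)` is the zeta function of the lattice `α⁻¹Ω`, and is
computed by splitting the sum over `α⁻¹Ω` into cosets of `Ω`. -/
theorem cm_formula (L : PeriodPair) {α : ℂ} (hα : α ≠ 0) (h : ∀ l ∈ L.lattice, α * l ∈ L.lattice) :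
    ∃ (Q : Type) (_ : Fintype Q) (u : Q → ℂ), (∀ q, α * u q ∈ L.lattice) ∧
      (∀ q, u q = 0 ∨ u q ∉ L.lattice) ∧ (∀ q, (Fintype.card Q : ℂ) * u q ∈ L.lattice) ∧
      Fintype.card Q ≠ 0 ∧ ∀ z, α * zt L (α * z) =
        ∑ q, (zt L (z - u q) - zt L (-u q) + z * ℘[L] (u q)) := by
  let T := mulEnd L α h
  have hT : Function.Injective T := by
    intro x y hxy
    have := congrArg Subtype.val hxy
    exact Subtype.ext (mul_left_cancel₀ hα this)
  let Q := L.lattice ⧸ T.range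
  have : Finite Q := Submodule.finiteQuotientOfFreeOfRankEq _ (LinearMap.finrank_range_of_inj hT)
  have : Fintype Q := Fintype.ofFinite Q
  classical
  have hσ : ∃ σ : Q → L.lattice, (∀ q, T.range.mkQ (σ q) = q) ∧ σ 0 = 0 := by
    refine ⟨Function.update Quotient.out 0 0, fun q => ?_, by simp⟩
    by_cases hq : q = 0
    · subst hq; simp
    · rw [Function.update_of_ne hq]; exact Quotient.out_eq q
  obtain ⟨σ, hσ1, hσ0⟩ := hσ
  have hbij : Function.Bijective (fun p : Q × L.lattice => σ p.1 + T p.2) := by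
    constructor
    · rintro ⟨q, l⟩ ⟨q', l'⟩ heq
      have h1 := congrArg T.range.mkQ heq
      have h0 : ∀ l, T.range.mkQ (T l) = 0 := fun l => by simp
      simp only [map_add, hσ1, h0, add_zero] at h1
      subst h1
      simp only [add_right_inj] at heq
      rw [hT heq]
    · intro l
      have : l - σ (T.range.mkQ l) ∈ T.range := by
        rw [← Submodule.Quotient.mk_eq_zero, ← Submodule.mkQ_apply, map_sub, hσ1, sub_self]
      obtain ⟨l', hl'⟩ := this
      exact ⟨(T.range.mkQ l, l'), by simp only [hl']; abel⟩
  refine ⟨Q, inferInstance, fun q => σ q / α, fun q => ?_, fun q => ?_, fun q => ?_,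
    Fintype.card_ne_zero, fun z => ?_⟩
  · rw [mul_div_cancel₀ _ hα]; exact (σ q).2
  · by_cases hq : q = 0
    · left; simp [hq, hσ0]
    · refine Or.inr fun hm => hq ?_
      have : T ⟨_, hm⟩ = σ q := Subtype.ext (mul_div_cancel₀ _ hα)
      rw [← hσ1 q, ← this, Submodule.mkQ_apply, Submodule.Quotient.mk_eq_zero]
      exact ⟨_, rfl⟩
  · have h0 : (Fintype.card Q) • σ q ∈ T.range := by
      rw [← Submodule.Quotient.mk_eq_zero, ← Submodule.mkQ_apply, map_nsmul, hσ1,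
        card_nsmul_eq_zero]
    obtain ⟨l, hl⟩ := h0
    have h1 : α * (l : ℂ) = Fintype.card Q * σ q := by
      simpa using! congrArg Subtype.val hl
    rw [← mul_div_assoc, ← h1, mul_div_cancel_left₀ _ hα]
    exact l.2
  · have h1 := (summable_zt L (α * z)).hasSum.mul_left α
    have h2 := ((Equiv.ofBijective _ hbij).hasSum_iff.mpr h1).prod_fiberwise
      (g := fun q => zt L (z - σ q / α) - zt L (-(σ q / α)) + z * ℘[L] (σ q / α)) (fun q => by
        refine (hasSum_coset L z (σ q / α)).congr_fun fun l => ?_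
        have e : ((σ q + T l : L.lattice) : ℂ) = α * (σ q / α + l) := by
          change (σ q : ℂ) + α * l = _
          field_simp
        simp only [Function.comp_apply, Equiv.ofBijective_apply, e, ← mul_sub]
        generalize (σ q : ℂ) / α + l = w
        simp only [mul_inv, div_eq_mul_inv, mul_pow]
        field_simp)
    exact h2.unique (hasSum_fintype _)

lemma cm_algebraic (L : PeriodPair) {α : ℂ} (h : ∀ l ∈ L.lattice, α * l ∈ L.lattice) :
    IsAlgebraic ℚ α := by
  have : IsIntegral ℤ α := by
    refine isIntegral_of_smul_mem_submodule L.lattice ?_ ?_ α h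
    · rw [Submodule.ne_bot_iff]
      exact ⟨L.ω₁, L.mem_lattice.mpr ⟨1, 0, by simp⟩, w1_ne L⟩
    · exact (Module.Finite.iff_fg).mp inferInstance
  exact (this.tower_top (A := ℚ)).isAlgebraic

/-- The conjugate of a complex multiplication `α` is `N/α`, where `N` is the number of terms in the
formula for `αζ(αz)`: compare quasi-periods and use Legendre's relation. -/
lemma cm_conj (L : PeriodPair) {α C : ℂ} {N : ℕ} (h : ∀ l ∈ L.lattice, α * l ∈ L.lattice)
    (H : ∀ (η : ℂ → ℂ), (∀ l ∈ L.lattice, ∀ z, z ∉ L.lattice → zt L (z + l) = zt L z + η l) →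
      ∀ l ∈ L.lattice, α * η (α * l) = N * η l + C * l) :
    α * (starRingEnd ℂ α) = N := by
  obtain ⟨η₁, η₂, e, he, h1, h2, hleg⟩ := quasi_periods L
  have hq := quasi_lattice L h1 h2
  have m1 : L.ω₁ ∈ L.lattice := L.mem_lattice.mpr ⟨1, 0, by simp⟩
  have m2 : L.ω₂ ∈ L.lattice := L.mem_lattice.mpr ⟨0, 1, by simp⟩
  obtain ⟨a, b, hab⟩ := L.mem_lattice.mp (h _ m1)
  obtain ⟨c, d, hcd⟩ := L.mem_lattice.mp (h _ m2)
  have hη : ∃ η : ℂ → ℂ, ∀ l ∈ L.lattice, ∀ z, z ∉ L.lattice → zt L (z + l) = zt L z + η l := by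
    choose! η hη using fun l (hl : l ∈ L.lattice) => quasi_exists L hl
    exact ⟨η, hη⟩
  obtain ⟨η, hη⟩ := hη
  obtain ⟨w, hw⟩ := exists_notMem_of_countable (countable_lattice L)
  have hval : ∀ m n : ℤ, η (m * L.ω₁ + n * L.ω₂) = m * η₁ + n * η₂ := by
    intro m n
    have := hη _ (lat_mem L m n) w hw
    rw [hq m n w hw] at this
    linear_combination -this
  have k1 := H η hη _ m1
  have k2 := H η hη _ m2
  have v1 := hval 1 0
  have v2 := hval 0 1
  norm_num at v1 v2
  rw [← hab, hval, v1] at k1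
  rw [← hcd, hval, v2] at k2
  have hP : L.ω₁ * η₂ - L.ω₂ * η₁ ≠ 0 := by
    rw [hleg]
    refine mul_ne_zero ?_ (by simp [Real.pi_ne_zero])
    rcases he with rfl | rfl <;> norm_num
  have hN : α * (a + d - α) = N := by
    refine mul_right_cancel₀ hP ?_
    linear_combination L.ω₁ * k2 - L.ω₂ * k1 - α * η₁ * hcd + α * η₂ * hab
  have him := im_ne L
  have hw1 := w1_ne L
  by_cases hα : α.im = 0
  · have hr : ((b : ℂ) * (L.ω₂ / L.ω₁)) = α - a := by
      field_simp; linear_combination hab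
    have hb : b = 0 := by
      have := congrArg Complex.im hr
      simp only [Complex.mul_im, Complex.intCast_re, Complex.intCast_im, zero_mul, add_zero,
        Complex.sub_im, hα, sub_zero] at this
      exact_mod_cast (mul_eq_zero.mp this).resolve_right him
    have hαa : α = a := by
      rw [hb] at hr; linear_combination -hr
    have hc : ((d : ℂ) - a) * (L.ω₂ / L.ω₁) = - c := by
      field_simp; linear_combination hcd + L.ω₂ * hαa
    have hd : (d : ℝ) - a = 0 := by
      have := congrArg Complex.im hc
      simp only [Complex.mul_im, Complex.intCast_re, Complex.intCast_im, zero_mul, add_zero,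
        Complex.sub_im, Complex.sub_re, sub_zero, Complex.neg_im, neg_zero] at this
      exact (mul_eq_zero.mp this).resolve_right him
    have hd' : (d : ℂ) = a := by exact_mod_cast sub_eq_zero.mp hd
    rw [← hN, hαa, hd', map_intCast]; ring
  · have hne : starRingEnd ℂ α - α ≠ 0 := by
      intro h0
      exact hα (Complex.conj_eq_iff_im.mp (sub_eq_zero.mp h0))
    have hN' := congrArg (starRingEnd ℂ) hN
    simp only [map_mul, map_sub, map_add, map_intCast, map_natCast] at hN'
    have : starRingEnd ℂ α = a + d - α := by
      refine mul_left_cancel₀ hne ?_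
      linear_combination hN - hN'
    rw [this, hN]

/-- Compatibility of `g` and `μ` with complex multiplications: `g` is linear and `μ` is antilinear
up to a multiple of `D - g`. -/
theorem cm_g_mu (L : PeriodPair) {D : Derivation ℚ ℂ ℂ} {g μ : ℂ →+ ℂ}
    (hg : ∀ l ∈ L.lattice, g l = 0)
    (h : ∀ x, x ∉ L.lattice → D (℘[L] x) = ℘'[L] x * g x ∧ D (zt L x) + ℘[L] x * g x = μ x)
    {α : ℂ} (hαL : ∀ l ∈ L.lattice, α * l ∈ L.lattice) :
    (∀ z, g (α * z) = α * g z) ∧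
      ∃ c, ∀ z, μ (α * z) = starRingEnd ℂ α * μ z + c * (D z - g z) := by
  by_cases hα : α = 0
  · subst hα; exact ⟨by simp, 0, by simp⟩
  obtain ⟨Q, _, u, hu1, hu2, hu3, hQ, hu⟩ := cm_formula L hα hαL
  have hDα := derivation_algebraic D (cm_algebraic L hαL)
  have hsub : ∀ z, α * z ∉ L.lattice → ∀ q, z - u q ∉ L.lattice := by
    intro z hz q hm
    have := add_mem (hαL _ hm) (hu1 q)
    exact hz (by rwa [mul_sub, sub_add_cancel] at this)
  have hzL : ∀ z, α * z ∉ L.lattice → z ∉ L.lattice := fun z hz hm => hz (hαL z hm)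
  have hgu : ∀ q, g (u q) = 0 := by
    intro q
    have h1 := hg _ (hu3 q)
    rw [← nsmul_eq_mul, map_nsmul, nsmul_eq_mul] at h1
    exact (mul_eq_zero.mp h1).resolve_left (by exact_mod_cast hQ)
  have hDu : ∀ q, D (℘[L] (u q)) = 0 := by
    intro q
    rcases hu2 q with h0 | h0
    · rw [h0, wp_zero, map_zero]
    · rw [(h _ h0).1, hgu, mul_zero]
  have hDzu : ∀ q, D (zt L (-u q)) = μ (-u q) := by
    intro q
    rcases hu2 q with h0 | h0
    · rw [h0, neg_zero, zt_zero, map_zero, map_zero]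
    · rw [← (h _ (mt (neg_notMem L).mp h0)).2, map_neg, hgu, neg_zero, mul_zero, add_zero]
  have hcl := L.isClosed_lattice.isOpen_compl.preimage (f := fun z => α * z) (by fun_prop)
  -- the formula differentiated once and twice
  have hP : ∀ z, α * z ∉ L.lattice →
      α ^ 2 * ℘[L] (α * z) = ∑ q, (℘[L] (z - u q) - ℘[L] (u q)) := by
    intro z hz
    have d0 : HasDerivAt (fun z => zt L (α * z)) (-℘[L] (α * z) * α) z :=
      (hasDerivAt_zt L hz).comp z (by simpa using (hasDerivAt_id z).const_mul α)
    have d1 := d0.const_mul α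
    have d2 : HasDerivAt (fun z => ∑ q, (zt L (z - u q) - zt L (-u q) + z * ℘[L] (u q)))
        (∑ q, (-℘[L] (z - u q) + 1 * ℘[L] (u q))) z := by
      refine HasDerivAt.fun_sum fun q _ => ?_
      exact (((hasDerivAt_zt L (hsub z hz q)).comp_sub_const z (u q)).sub_const _).add
        ((hasDerivAt_id z).mul_const _)
    have h3 := d1.unique (d2.congr_of_eventuallyEq (.of_forall hu))
    have h4 : ∑ q, (℘[L] (z - u q) - ℘[L] (u q)) = - ∑ q, (-℘[L] (z - u q) + 1 * ℘[L] (u q)) := by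
      rw [← Finset.sum_neg_distrib]; exact Finset.sum_congr rfl fun q _ => by ring
    rw [h4, ← h3]; ring
  have hP' : ∀ z, α * z ∉ L.lattice →
      α ^ 3 * ℘'[L] (α * z) = ∑ q, ℘'[L] (z - u q) := by
    intro z hz
    have d0 : HasDerivAt (fun z => ℘[L] (α * z)) (℘'[L] (α * z) * α) z :=
      (hasDerivAt_wp L hz).comp z (by simpa using (hasDerivAt_id z).const_mul α)
    have d1 := d0.const_mul (α ^ 2)
    have d2 : HasDerivAt (fun z => ∑ q, (℘[L] (z - u q) - ℘[L] (u q)))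
        (∑ q, ℘'[L] (z - u q)) z := by
      refine HasDerivAt.fun_sum fun q _ => ?_
      exact ((hasDerivAt_wp L (hsub z hz q)).comp_sub_const z (u q)).sub_const _
    have e : (fun z => α ^ 2 * ℘[L] (α * z)) =ᶠ[𝓝 z]
        fun z => ∑ q, (℘[L] (z - u q) - ℘[L] (u q)) := by
      filter_upwards [hcl.mem_nhds hz] with w hw using hP w hw
    have h3 := d1.unique (d2.congr_of_eventuallyEq e)
    rw [← h3]; ring
  -- the identities for generic arguments
  have gen1 : ∀ z, 2 * (α * z) ∉ L.lattice → g (α * z) = α * g z := by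
    intro z hz2
    have hz : α * z ∉ L.lattice := fun hm => hz2 (two_mul_mem L hm)
    have h0 := wp'_ne_zero L hz2
    have h1 := congrArg D (hP z hz)
    rw [Derivation.leibniz, Derivation.leibniz_pow, hDα, (h _ hz).1, map_sum] at h1
    have h2 : ∑ q, D (℘[L] (z - u q) - ℘[L] (u q)) = (∑ q, ℘'[L] (z - u q)) * g z := by
      rw [Finset.sum_mul]
      refine Finset.sum_congr rfl fun q _ => ?_
      rw [map_sub, (h _ (hsub z hz q)).1, hDu, map_sub, hgu, sub_zero, sub_zero]
    rw [h2, ← hP' z hz] at h1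
    simp only [smul_eq_mul] at h1
    refine mul_left_cancel₀ (mul_ne_zero (pow_ne_zero 2 hα) h0) ?_
    linear_combination h1
  have hα' : Function.Injective (fun z => 2 * (α * z)) := by
    intro x y hxy
    simpa [hα] using hxy
  have hBc := (countable_lattice L).preimage hα'
  have ext1 : ∀ z, g (α * z) = α * g z := by
    intro z
    obtain ⟨v, hv⟩ := exists_generic hBc (C := {0, z}) (by simp)
    have h1 := gen1 (v + 0) (hv 0 (by simp))
    have h2 := gen1 (v + z) (hv z (by simp))
    rw [add_zero] at h1
    rw [mul_add, map_add, map_add] at h2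
    linear_combination h2 - h1
  set C := ∑ q, ℘[L] (u q) with hC
  have gen2 : ∀ z, 2 * (α * z) ∉ L.lattice →
      α * μ (α * z) = Fintype.card Q * μ z + C * (D z - g z) := by
    intro z hz2
    have hz : α * z ∉ L.lattice := fun hm => hz2 (two_mul_mem L hm)
    have h1 := congrArg D (hu z)
    rw [Derivation.leibniz, hDα, smul_zero, add_zero, smul_eq_mul, map_sum] at h1
    have h2 : ∑ q, D (zt L (z - u q) - zt L (-u q) + z * ℘[L] (u q)) =
        Fintype.card Q * μ z - (∑ q, (℘[L] (z - u q) - ℘[L] (u q))) * g z +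
          C * (D z - g z) := by
      rw [hC, Finset.sum_mul, Finset.sum_mul, ← nsmul_eq_mul]
      change _ = (Finset.univ : Finset Q).card • μ z - _ + _
      rw [← Finset.sum_const, ← Finset.sum_sub_distrib, ← Finset.sum_add_distrib]
      refine Finset.sum_congr rfl fun q _ => ?_
      have h5 := (h _ (hsub z hz q)).2
      rw [map_sub, map_sub, hgu, sub_zero] at h5
      rw [map_add, map_sub, hDzu, Derivation.leibniz, hDu, map_neg, smul_zero, zero_add,
        smul_eq_mul]
      linear_combination h5
    have h6 := (h _ hz).2
    rw [h2, ← hP z hz] at h1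
    rw [ext1] at h6
    linear_combination h1 - α * h6
  have ext2 : ∀ z, α * μ (α * z) = Fintype.card Q * μ z + C * (D z - g z) := by
    intro z
    obtain ⟨v, hv⟩ := exists_generic hBc (C := {0, z}) (by simp)
    have h1 := gen2 (v + 0) (hv 0 (by simp))
    have h2 := gen2 (v + z) (hv z (by simp))
    rw [add_zero] at h1
    rw [mul_add, map_add, map_add, map_add, map_add] at h2
    linear_combination h2 - h1
  have hconj : α * starRingEnd ℂ α = Fintype.card Q := by
    refine cm_conj L (C := C) hαL fun η hη l hl => ?_
    obtain ⟨v, hv⟩ := exists_generic hBc (C := {0}) (by simp)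
    have hv0 := hv 0 rfl
    rw [add_zero] at hv0
    have hz : α * v ∉ L.lattice := fun hm => hv0 (two_mul_mem L hm)
    have h1 := hu v
    have h2 := hu (v + l)
    rw [mul_add, hη _ (hαL l hl) _ hz, mul_add, h1] at h2
    have h3 : ∑ q, (zt L (v + l - u q) - zt L (-u q) + (v + l) * ℘[L] (u q)) =
        ∑ q, (zt L (v - u q) - zt L (-u q) + v * ℘[L] (u q)) + (Fintype.card Q * η l + C * l) := by
      rw [hC, Finset.sum_mul, ← nsmul_eq_mul]
      change _ = _ + ((Finset.univ : Finset Q).card • η l + _)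
      rw [← Finset.sum_const, ← Finset.sum_add_distrib, ← Finset.sum_add_distrib]
      refine Finset.sum_congr rfl fun q _ => ?_
      rw [show v + l - u q = v - u q + l by ring, hη l hl _ (hsub v hz q)]
      ring
    rw [h3] at h2
    exact add_left_cancel h2
  refine ⟨ext1, C / α, fun z => mul_left_cancel₀ hα ?_⟩
  rw [ext2, ← hconj]
  field_simp

/-! ### Algebraic independence and derivations -/

open AlgebraicIndependent in
/-- A family spanning, up to algebraic dependence, an algebraically independent family with at least
as many members is algebraically independent: this is a rank count in the matroid of algebraically
independent sets. -/
lemma algIndep_of_card {ι κ : Type} [Fintype ι] [Fintype κ] (z : ι → ℂ) (y : κ → ℂ)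
    (hy : AlgebraicIndependent ℚ y)
    (hc : ∀ k, y k ∈ (matroid ℚ ℂ).closure (Set.range z))
    (hle : Fintype.card ι ≤ Fintype.card κ) : AlgebraicIndependent ℚ z := by
  have h1 : (matroid ℚ ℂ).Indep (Set.range y) :=
    matroid_indep_iff.mpr hy.to_subtype_range
  have h2 : (Set.range y).encard ≤ (matroid ℚ ℂ).eRk (Set.range z) := by
    rw [← Matroid.eRk_closure_eq]
    exact h1.encard_le_eRk_of_subset (by rintro _ ⟨k, rfl⟩; exact hc k)
  have h3 : (Set.range y).encard = (Fintype.card κ : ℕ∞) := by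
    rw [← Set.image_univ, hy.injective.encard_image]; simp
  have h4 : (Set.range z).encard ≤ (Fintype.card ι : ℕ∞) := by
    rw [← Set.image_univ]; exact (Set.encard_image_le _ _).trans (by simp)
  have h5 : (Fintype.card ι : ℕ∞) ≤ (Fintype.card κ : ℕ∞) := by exact_mod_cast hle
  have h6 : (Set.range z).encard ≤ (matroid ℚ ℂ).eRk (Set.range z) :=
    h4.trans (h5.trans (h3.symm.le.trans h2))
  have h7 : (matroid ℚ ℂ).Indep (Set.range z) :=
    (Matroid.indep_iff_eRk_eq_encard_of_finite (Set.finite_range z)).mpr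
      (le_antisymm (Matroid.eRk_le_encard _ _) h6)
  have h8 : (Fintype.card ι : ℕ∞) ≤ (Set.range z).encard :=
    h5.trans (h3.symm.le.trans (h2.trans (Matroid.eRk_le_encard _ _)))
  have hinj : Function.Injective z := by
    have : Fintype.card ι ≤ (Set.range z).ncard := by
      have := (Set.finite_range z).cast_ncard_eq
      rw [← this] at h8
      exact_mod_cast h8
    rw [← Set.injOn_univ]
    apply (Set.ncard_image_iff (Set.toFinite _)).mp
    rw [Set.image_univ]
    apply le_antisymm
    · rw [← Set.image_univ]; exact Set.ncard_image_le
    · rw [Set.ncard_univ, Nat.card_eq_fintype_card]; exact this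
  exact AlgebraicIndependent.of_subtype_range hinj (matroid_indep_iff.mp h7)

lemma mem_closure_of_mem_adjoin {B S : Set ℂ} {x : ℂ}
    (hS : ∀ y ∈ S, IsAlgebraic (Algebra.adjoin ℚ B) y)
    (hx : x ∈ IntermediateField.adjoin ℚ S) : IsAlgebraic (Algebra.adjoin ℚ B) x := by
  induction hx using IntermediateField.adjoin_induction with
  | mem x hx => exact hS x hx
  | algebraMap q =>
    exact isAlgebraic_algebraMap (algebraMap ℚ (Algebra.adjoin ℚ B) q)
  | add x y _ _ hx hy => exact hx.add hy
  | inv x _ hx => exact hx.inv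
  | mul x y _ _ hx hy => exact hx.mul hy

/-- The field of constants of a derivation. -/
def constField (D : Derivation ℚ ℂ ℂ) : IntermediateField ℚ ℂ where
  carrier := {x | D x = 0}
  mul_mem' {a b} ha hb := by
    simp only [Set.mem_ofPred_eq] at *
    rw [D.leibniz, ha, hb]; simp
  add_mem' {a b} ha hb := by
    simp only [Set.mem_ofPred_eq] at *
    rw [map_add, ha, hb, add_zero]
  algebraMap_mem' r := D.map_algebraMap r
  inv_mem' a ha := by
    simp only [Set.mem_ofPred_eq] at *
    rw [D.leibniz_inv, ha, smul_zero]

/-- The field of constants is algebraically closed in `ℂ`. -/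
lemma derivation_closure (D : Derivation ℚ ℂ ℂ) {B : Set ℂ} (hB : ∀ b ∈ B, D b = 0) {x : ℂ}
    (hx : IsAlgebraic (Algebra.adjoin ℚ B) x) : D x = 0 := by
  have hle : Algebra.adjoin ℚ B ≤ (constField D).toSubalgebra :=
    Algebra.adjoin_le fun b hb => hB b hb
  have hx' : IsAlgebraic (constField D) x := hx.tower_top_of_subalgebra_le hle
  let D' : Derivation (constField D) ℂ ℂ :=
    Derivation.mk'
      { toFun := D
        map_add' := map_add D
        map_smul' := fun c y => by
          have hc' : D (c : ℂ) = 0 := c.2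
          change D ((c : ℂ) * y) = (c : ℂ) * D y
          rw [D.leibniz, hc']
          simp }
      (fun a b => D.leibniz a b)
  have hi := hx'.isIntegral
  have h1 := D'.map_aeval (minpoly (constField D) x) x
  rw [minpoly.aeval, map_zero] at h1
  have h2 := (minpoly.irreducible hi).separable.aeval_derivative_ne_zero
    (minpoly.aeval (constField D) x)
  exact (smul_eq_zero.mp h1.symm).resolve_left h2

/-- A derivation may be prescribed on a transcendence basis `x`: it may be on the polynomial ring
`ℚ[x]`, and `ℂ` is formally étale over `ℚ[x]`, being algebraic over the field of fractions. -/
lemma exists_derivation {ι : Type} (x : ι → ℂ) (hx : IsTranscendenceBasis ℚ x) (c : ι → ℂ) :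
    ∃ D : Derivation ℚ ℂ ℂ, ∀ i, D (x i) = c i := by
  let S := MvPolynomial ι ℚ
  let a1 : Algebra S ℂ := (MvPolynomial.aeval x).toAlgebra
  have hmap : ∀ s : S, algebraMap S ℂ s = MvPolynomial.aeval x s := fun s => rfl
  have : IsScalarTower ℚ S ℂ := IsScalarTower.of_algebraMap_eq fun q => by
    rw [hmap]
    exact ((MvPolynomial.aeval x).commutes q).symm
  have hinj : Function.Injective (algebraMap S ℂ) := hx.1
  have : FaithfulSMul S ℂ := (faithfulSMul_iff_algebraMap_injective S ℂ).mpr hinj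
  let F := FractionRing S
  let a2 : Algebra F ℂ := FractionRing.liftAlgebra S ℂ
  have : IsScalarTower S F ℂ := FractionRing.isScalarTower_liftAlgebra S ℂ
  have alg1 : Algebra.IsAlgebraic S ℂ := by
    constructor
    intro z
    have h := hx.isAlgebraic.isAlgebraic z
    exact h.of_ringHom_of_comp_eq (hx.1.aevalEquiv : S →+* Algebra.adjoin ℚ (Set.range x))
      (RingHom.id ℂ) hx.1.aevalEquiv.surjective Function.injective_id rfl
  have : Algebra.IsAlgebraic F ℂ :=
    Algebra.IsAlgebraic.extendScalars (R := S) (IsFractionRing.injective S F)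
  have : Algebra.FormallyEtale S F :=
    Algebra.FormallyEtale.of_isLocalization (nonZeroDivisors S)
  have : CharZero F := inferInstance
  have : Algebra.FormallyEtale F ℂ := Algebra.FormallyEtale.of_isSeparable F ℂ
  have : Algebra.FormallyEtale S ℂ := Algebra.FormallyEtale.comp S F ℂ
  let d : Derivation ℚ S ℂ := MvPolynomial.mkDerivation ℚ c
  let e := KaehlerDifferential.tensorKaehlerEquivOfFormallyEtale ℚ S ℂ
  let l : TensorProduct S ℂ (Ω[S⁄ℚ]) →ₗ[ℂ] ℂ :=
    TensorProduct.AlgebraTensorModule.lift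
      ((LinearMap.toSpanSingleton ℂ (Ω[S⁄ℚ] →ₗ[S] ℂ) d.liftKaehlerDifferential))
  let D : Derivation ℚ ℂ ℂ :=
    ((l ∘ₗ e.symm.toLinearMap).compDer (KaehlerDifferential.D ℚ ℂ))
  refine ⟨D, fun i => ?_⟩
  have h1 : x i = algebraMap S ℂ (MvPolynomial.X i) := by rw [hmap]; simp
  have h2 : D (x i) = l (e.symm (KaehlerDifferential.D ℚ ℂ (x i))) := rfl
  rw [h2, h1, KaehlerDifferential.tensorKaehlerEquivOfFormallyEtale_symm_D_algebraMap]
  simp only [l, d, TensorProduct.AlgebraTensorModule.lift_tmul]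
  simp
  exact MvPolynomial.mkDerivation_X ℚ c i

/-- A derivation may be prescribed on any algebraically independent family. -/
lemma exists_derivation' {ι : Type} (z : ι → ℂ) (hz : AlgebraicIndependent ℚ z) (c : ι → ℂ) :
    ∃ D : Derivation ℚ ℂ ℂ, ∀ i, D (z i) = c i := by
  obtain ⟨u, hu, hb⟩ := exists_isTranscendenceBasis_superset hz.to_subtype_range
  obtain ⟨D, hD⟩ := exists_derivation _ hb (fun a => Function.extend z c 0 a)
  refine ⟨D, fun i => ?_⟩
  have := hD ⟨z i, hu ⟨i, rfl⟩⟩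
  rwa [hz.injective.extend_apply] at this

/-- Suppose that the transcendence degree of `ℚ(f, o)` misses the number of generators by at most one.
Either `f` is algebraically independent, or the deficiency is exhausted by `f`, and then `o` is
algebraically independent over `ℚ(f)`, so that derivations killing `f` take arbitrary values on `o`. -/
lemma indep_or_derivations {a n d : ℕ} (f : Fin a → ℂ) (o : Fin n → ℂ) (y : Fin d → ℂ)
    (hy : AlgebraicIndependent ℚ y)
    (hc : ∀ k, IsAlgebraic (Algebra.adjoin ℚ (Set.range f ∪ Set.range o)) (y k))
    (hd : a + n ≤ d + 1) :
    AlgebraicIndependent ℚ f ∨ ∀ c : Fin n → ℂ, ∃ D : Derivation ℚ ℂ ℂ,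
      (∀ i, D (f i) = 0) ∧ ∀ j, D (o j) = c j := by
  classical
  by_cases hf : AlgebraicIndependent ℚ f
  · exact Or.inl hf
  refine Or.inr fun c => ?_
  obtain ⟨b, hb⟩ := (AlgebraicIndependent.matroid ℚ ℂ).exists_isBasis (Set.range f)
  obtain ⟨hb1, hb2, hb3⟩ := AlgebraicIndependent.matroid_isBasis_iff.mp hb
  have : Fintype b := ((Set.finite_range f).subset hb2).fintype
  have hcard : Fintype.card b < a := by
    by_contra hlt
    refine hf (algIndep_of_card f (Subtype.val : b → ℂ) hb1 (fun k => ?_) (by simpa using hlt))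
    exact (AlgebraicIndependent.matroid ℚ ℂ).mem_closure_of_mem (hb2 k.2)
  let z : b ⊕ Fin n → ℂ := Sum.elim Subtype.val o
  have hz : AlgebraicIndependent ℚ z := by
    refine algIndep_of_card z y hy (fun k => ?_) (by rw [Fintype.card_sum, Fintype.card_fin, Fintype.card_fin]; omega)
    rw [AlgebraicIndependent.matroid_closure_eq, SetLike.mem_coe, Subalgebra.mem_algebraicClosure]
    have hr : Set.range z = b ∪ Set.range o := by simp [z, Set.Sum.elim_range]
    rw [hr]
    refine (hc k).adjoin_of_forall_isAlgebraic ?_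
    rintro v ⟨hv | hv, hv'⟩
    · exact (hb3 v hv).tower_top_of_subalgebra_le (Algebra.adjoin_mono Set.subset_union_left)
    · exact absurd (Or.inr hv) hv'
  obtain ⟨D, hD⟩ := exists_derivation' z hz (Sum.elim (fun _ => 0) c)
  refine ⟨D, fun i => ?_, fun j => hD (Sum.inr j)⟩
  exact derivation_closure D (B := b) (fun v hv => hD (Sum.inl ⟨v, hv⟩)) (hb3 _ ⟨i, rfl⟩)

/-- If the transcendence degree of `ℚ(f, o)` is the number of generators, then `f` is algebraically
independent. -/
lemma indep_of_full {a n d : ℕ} (f : Fin a → ℂ) (o : Fin n → ℂ) (y : Fin d → ℂ)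
    (hy : AlgebraicIndependent ℚ y)
    (hc : ∀ k, IsAlgebraic (Algebra.adjoin ℚ (Set.range f ∪ Set.range o)) (y k))
    (hd : a + n ≤ d) : AlgebraicIndependent ℚ f := by
  have h : AlgebraicIndependent ℚ (Sum.elim f o) := by
    refine algIndep_of_card _ y hy (fun k => ?_) (by simpa using hd)
    rw [AlgebraicIndependent.matroid_closure_eq, SetLike.mem_coe, Subalgebra.mem_algebraicClosure,
      Set.Sum.elim_range]
    exact hc k
  exact h.comp Sum.inl Sum.inl_injective

/-! ### The exceptional case -/

lemma exists_denominator {ω₁ ω₂ : ℂ} {n : ℕ} (c : Fin n → ℂ) (hc : ∀ i, c i ∈ endQ ω₁ ω₂) :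
    ∃ M : ℤ, M ≠ 0 ∧ ∀ i, ∀ w ∈ LatticePts ω₁ ω₂, (M : ℂ) * c i * w ∈ LatticePts ω₁ ω₂ := by
  choose m hm hs using hc
  refine ⟨∏ i, m i, Finset.prod_ne_zero_iff.mpr fun i _ => hm i, fun i w hw => ?_⟩
  obtain ⟨k, hk⟩ := Finset.dvd_prod_of_mem m (Finset.mem_univ i)
  obtain ⟨a, b, hab⟩ := hs i w hw
  refine ⟨k * a, k * b, ?_⟩
  rw [hk]
  push_cast
  linear_combination (k : ℂ) * hab

/-- `g` vanishes at `x` as soon as `D` kills `℘(x)`. -/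
lemma g_eq_zero (L : PeriodPair) {D : Derivation ℚ ℂ ℂ} {g μ : ℂ →+ ℂ}
    (hg : ∀ l ∈ L.lattice, g l = 0)
    (h : ∀ x, x ∉ L.lattice → D (℘[L] x) = ℘'[L] x * g x ∧ D (zt L x) + ℘[L] x * g x = μ x)
    {x : ℂ} (hx : x ∉ L.lattice) (hD : D (℘[L] x) = 0) : g x = 0 := by
  by_cases h2 : 2 * x ∈ L.lattice
  · have := hg _ h2
    rw [two_mul, map_add] at this
    linear_combination this / 2
  · have h1 := (h x hx).1
    rw [hD] at h1
    exact (mul_eq_zero.mp h1.symm).resolve_left (wp'_ne_zero L h2)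

/-- If the periods are combinations of the `pᵢ` over the field of endomorphisms, then derivations
killing `2πi` and the `pᵢ` cannot separate the numbers `ζ(pᵢ)`, `i < m`, and `℘(pᵢ)`, `i ≥ m`. -/
lemma no_derivations (L : PeriodPair) (h2 : IsAlgebraic ℚ L.g₂) (h3 : IsAlgebraic ℚ L.g₃)
    {m n : ℕ} (p : Fin n → ℂ) (hp : ∀ i, p i ∉ L.lattice)
    (hpP : ∀ i : Fin n, (i : ℕ) < m → IsAlgebraic ℚ (℘[L] (p i)))
    (hpZ : ∀ i : Fin n, m ≤ (i : ℕ) → IsAlgebraic ℚ (zt L (p i)))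
    {M : ℤ} (hM : M ≠ 0) (α β : Fin n → ℂ)
    (hα : ∀ i, ∀ l ∈ L.lattice, α i * l ∈ L.lattice)
    (hβ : ∀ i, ∀ l ∈ L.lattice, β i * l ∈ L.lattice)
    (h₁ : (M : ℂ) * L.ω₁ = ∑ i, α i * p i) (h₂ : (M : ℂ) * L.ω₂ = ∑ i, β i * p i)
    (hD : ∀ j, ∃ D : Derivation ℚ ℂ ℂ, D (2 * Real.pi * I) = 0 ∧ (∀ i, D (p i) = 0) ∧
      ∀ i : Fin n, D (if (i : ℕ) < m then zt L (p i) else ℘[L] (p i)) = if i = j then 1 else 0) :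
    False := by
  have hMC : (M : ℂ) ≠ 0 := by exact_mod_cast hM
  have l1 : L.ω₁ ∈ L.lattice := by simpa using lat_mem L 1 0
  have l2 : L.ω₂ ∈ L.lattice := by simpa using lat_mem L 0 1
  have key : ∀ j, L.ω₁ * starRingEnd ℂ (β j) = L.ω₂ * starRingEnd ℂ (α j) := by
    intro j
    obtain ⟨D, hD1, hD2, hD3⟩ := hD j
    obtain ⟨g, μ, hg, h⟩ := exists_g_mu L h2 h3 D
    have other : ∀ i, i ≠ j → g (p i) = 0 := by
      intro i hij
      apply g_eq_zero L hg h (hp i)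
      by_cases him : (i : ℕ) < m
      · exact derivation_algebraic D (hpP i him)
      · have := hD3 i
        rwa [if_neg him, if_neg hij] at this
    -- `g` turns a relation `M ω = ∑ γᵢ pᵢ` into `γⱼ g(pⱼ) = 0`
    have gsum : ∀ (γ : Fin n → ℂ) (w : ℂ), w ∈ L.lattice →
        (∀ i, ∀ l ∈ L.lattice, γ i * l ∈ L.lattice) → (M : ℂ) * w = ∑ i, γ i * p i →
        γ j * g (p j) = 0 := by
      intro γ w hw hγ hs
      have e1 : g ((M : ℂ) * w) = 0 := by
        apply hg
        rw [← zsmul_eq_mul]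
        exact zsmul_mem hw M
      rw [hs, map_sum, Finset.sum_eq_single j] at e1
      · rwa [(cm_g_mu L hg h (hγ j)).1] at e1
      · intro i _ hij
        rw [(cm_g_mu L hg h (hγ i)).1, other i hij, mul_zero]
      · simp
    by_cases hjm : (j : ℕ) < m
    · have gz : ∀ i, g (p i) = 0 := by
        intro i
        by_cases hij : i = j
        · subst hij
          exact g_eq_zero L hg h (hp i) (derivation_algebraic D (hpP i hjm))
        · exact other i hij
      have mu_p : ∀ i, μ (p i) = if i = j then 1 else 0 := by
        intro i
        have e1 := (h (p i) (hp i)).2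
        rw [gz i, mul_zero, add_zero] at e1
        rw [← e1]
        by_cases him : (i : ℕ) < m
        · have := hD3 i
          rwa [if_pos him] at this
        · rw [derivation_algebraic D (hpZ i (not_lt.mp him)), if_neg]
          rintro rfl
          exact him hjm
      have musum : ∀ (γ : Fin n → ℂ) (w : ℂ),
          (∀ i, ∀ l ∈ L.lattice, γ i * l ∈ L.lattice) → (M : ℂ) * w = ∑ i, γ i * p i →
          D w = 0 ∧ (M : ℂ) * μ w = starRingEnd ℂ (γ j) := by
        intro γ w hγ hs
        constructor
        · have e1 : D ((M : ℂ) * w) = 0 := by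
            rw [hs, map_sum]
            refine Finset.sum_eq_zero fun i _ => ?_
            rw [D.leibniz, hD2, derivation_algebraic D (cm_algebraic L (hγ i))]
            simp
          rw [← zsmul_eq_mul, map_zsmul, zsmul_eq_mul] at e1
          exact (mul_eq_zero.mp e1).resolve_left hMC
        · have e1 : μ ((M : ℂ) * w) = starRingEnd ℂ (γ j) := by
            rw [hs, map_sum, Finset.sum_eq_single j]
            · obtain ⟨c, hc⟩ := (cm_g_mu L hg h (hγ j)).2
              rw [hc, mu_p, hD2, gz]
              simp
            · intro i _ hij
              obtain ⟨c, hc⟩ := (cm_g_mu L hg h (hγ i)).2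
              rw [hc, mu_p, hD2, gz]
              simp [hij]
            · simp
          rw [← e1, ← zsmul_eq_mul, ← zsmul_eq_mul, map_zsmul]
      obtain ⟨d1, m1⟩ := musum α L.ω₁ hα h₁
      obtain ⟨d2, m2⟩ := musum β L.ω₂ hβ h₂
      obtain ⟨η₁, η₂, e, he, q1, q2, leg⟩ := quasi_periods L
      rw [mu_period L hg h l1 q1] at m1
      rw [mu_period L hg h l2 q2] at m2
      have e1 := congrArg D leg
      have e2 : D (e * (2 * Real.pi * I)) = 0 := by
        rcases he with rfl | rfl
        · rw [one_mul, hD1]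
        · rw [neg_one_mul, map_neg, hD1, neg_zero]
      rw [e2, map_sub, D.leibniz, D.leibniz, d1, d2] at e1
      simp only [smul_eq_mul, mul_zero, add_zero] at e1
      rw [← m1, ← m2]
      linear_combination (M : ℂ) * e1
    · have gj : g (p j) ≠ 0 := by
        intro h0
        have := hD3 j
        rw [if_neg hjm, if_pos rfl, (h _ (hp j)).1, h0, mul_zero] at this
        exact zero_ne_one this
      have a0 := (mul_eq_zero.mp (gsum α _ l1 hα h₁)).resolve_right gj
      have b0 := (mul_eq_zero.mp (gsum β _ l2 hβ h₂)).resolve_right gj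
      rw [a0, b0]
      simp
  have hρ : starRingEnd ℂ (L.ω₂ / L.ω₁) = L.ω₂ / L.ω₁ := by
    have w1 := w1_ne L
    have hb : ∀ j, β j = starRingEnd ℂ (L.ω₂ / L.ω₁) * α j := by
      intro j
      apply (starRingEnd ℂ).injective
      rw [map_mul, Complex.conj_conj, div_mul_eq_mul_div, eq_div_iff w1, mul_comm, key]
    have e1 : (M : ℂ) * L.ω₂ = starRingEnd ℂ (L.ω₂ / L.ω₁) * ((M : ℂ) * L.ω₁) := by
      rw [h₁, h₂, Finset.mul_sum]
      exact Finset.sum_congr rfl fun i _ => by rw [hb i, mul_assoc]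
    rw [eq_div_iff w1]
    apply mul_left_cancel₀ hMC
    linear_combination -e1
  exact im_ne L (Complex.conj_eq_iff_im.mp hρ)

/-- **The Split Semi-Elliptic Conjecture implies the Split Semi-Elliptic Logarithms
Conjecture.** Assume the Split Semi-Elliptic Conjecture for `Ω`, and that `g₂`, `g₃` are
algebraic. Let `t₁, …, t_s` be `ℚ`-linearly independent complex numbers with each `e^{tₗ}`
algebraic, and let `p₁, …, p_n` be `k`-linearly independent elements of `ℂ ∖ Ω` such that
`℘(pᵢ)` is algebraic for `1 ≤ i ≤ m` and `ζ(p_j)` is algebraic for `m + 1 ≤ j ≤ n`.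
Then the `s + n` numbers `t₁, …, t_s, p₁, …, p_n` are algebraically independent over `ℚ`. -/
theorem splitSemiElliptic_implies_logarithms (ω₁ ω₂ : ℂ) (hΩ : IsLatticeBasis ω₁ ω₂)
    (hconj : SplitSemiEllipticConj ω₁ ω₂)
    (hg2 : IsAlgebraic ℚ (g2 ω₁ ω₂)) (hg3 : IsAlgebraic ℚ (g3 ω₁ ω₂))
    (s m n : ℕ) (hmn : m ≤ n)
    (t : Fin s → ℂ) (ht : LinearIndependent ℚ t)
    (hte : ∀ ℓ, IsAlgebraic ℚ (Complex.exp (t ℓ)))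
    (p : Fin n → ℂ) (hp : ∀ i, p i ∉ LatticePts ω₁ ω₂) (hpk : kLinInd ω₁ ω₂ p)
    (hpP : ∀ i : Fin n, (i : ℕ) < m → IsAlgebraic ℚ (wP ω₁ ω₂ (p i)))
    (hpZ : ∀ i : Fin n, m ≤ (i : ℕ) → IsAlgebraic ℚ (wZeta ω₁ ω₂ (p i))) :
    AlgebraicIndependent ℚ (Sum.elim t p) := by
  obtain ⟨hgen, hexc⟩ := hconj s n t p ht hp hpk
  have hp' : ∀ i, p i ∉ (PP hΩ).lattice := fun i hi => hp i ((mem_PP hΩ _).mp hi)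
  let o : Fin n → ℂ := fun i => if (i : ℕ) < m then wZeta ω₁ ω₂ (p i) else wP ω₁ ω₂ (p i)
  let B : Set ℂ := Set.range (Fin.append t p) ∪ Set.range o
  have ofAlg : ∀ {x : ℂ}, IsAlgebraic ℚ x → IsAlgebraic (Algebra.adjoin ℚ B) x :=
    fun hx => hx.extendScalars (algebraMap ℚ (Algebra.adjoin ℚ B)).injective
  have ofMem : ∀ {x : ℂ}, x ∈ B → IsAlgebraic (Algebra.adjoin ℚ B) x := fun {x} hx =>
    isAlgebraic_algebraMap (⟨x, Algebra.subset_adjoin hx⟩ : Algebra.adjoin ℚ B)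
  have hK : ∀ v ∈ Kgens ω₁ ω₂ t p, IsAlgebraic (Algebra.adjoin ℚ B) v := by
    rintro v (((((hv | hv) | hv) | hv) | hv) | hv)
    · rcases hv with rfl | rfl
      · exact ofAlg hg2
      · exact ofAlg hg3
    · obtain ⟨i, rfl⟩ := hv
      exact ofMem (Or.inl ⟨Fin.castAdd n i, by simp⟩)
    · obtain ⟨i, rfl⟩ := hv
      exact ofAlg (hte i)
    · obtain ⟨i, rfl⟩ := hv
      exact ofMem (Or.inl ⟨Fin.natAdd s i, by simp⟩)
    · obtain ⟨i, rfl⟩ := hv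
      by_cases him : (i : ℕ) < m
      · exact ofAlg (hpP i him)
      · exact ofMem (Or.inr ⟨i, if_neg him⟩)
    · obtain ⟨i, rfl⟩ := hv
      by_cases him : (i : ℕ) < m
      · exact ofMem (Or.inr ⟨i, if_pos him⟩)
      · exact ofAlg (hpZ i (not_lt.mp him))
  have hf : Sum.elim t p = Fin.append t p ∘ finSumFinEquiv := by
    ext x
    rcases x with x | x <;> simp
  suffices h : AlgebraicIndependent ℚ (Fin.append t p) by
    rw [hf]
    exact h.comp _ finSumFinEquiv.injective
  by_cases hE : ExceptionalCase ω₁ ω₂ t p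
  · obtain ⟨y, hy1, hy2⟩ := hexc hE
    rcases indep_or_derivations (Fin.append t p) o y hy2
      (fun k => mem_closure_of_mem_adjoin hK (hy1 k)) (by omega) with h | hD
    · exact h
    exfalso
    obtain ⟨hpi, hlat⟩ := hE
    obtain ⟨a, ha, ha'⟩ := hlat ω₁ ⟨1, 0, by simp⟩
    obtain ⟨b, hb, hb'⟩ := hlat ω₂ ⟨0, 1, by simp⟩
    obtain ⟨A, hA, hAs⟩ := exists_denominator a ha
    obtain ⟨C, hC, hCs⟩ := exists_denominator b hb
    refine no_derivations (PP hΩ) (by rwa [← g2_eq hΩ]) (by rwa [← g3_eq hΩ]) (m := m) p hp'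
      (fun i hi => by rw [← wP_eq hΩ (hp' i)]; exact hpP i hi)
      (fun i hi => by rw [← wZeta_eq hΩ (hp' i)]; exact hpZ i hi)
      (mul_ne_zero hA hC) (fun i => C * (A * a i)) (fun i => A * (C * b i)) ?_ ?_ ?_ ?_ ?_
    · intro i l hl
      have := zsmul_mem ((mem_PP hΩ _).mpr (hAs i l ((mem_PP hΩ _).mp hl))) C
      rwa [zsmul_eq_mul, ← mul_assoc] at this
    · intro i l hl
      have := zsmul_mem ((mem_PP hΩ _).mpr (hCs i l ((mem_PP hΩ _).mp hl))) A
      rwa [zsmul_eq_mul, ← mul_assoc] at this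
    · change ((A * C : ℤ) : ℂ) * ω₁ = _
      conv_lhs => rw [ha']
      rw [Finset.mul_sum]
      exact Finset.sum_congr rfl fun i _ => by push_cast; ring
    · change ((A * C : ℤ) : ℂ) * ω₂ = _
      conv_lhs => rw [hb']
      rw [Finset.mul_sum]
      exact Finset.sum_congr rfl fun i _ => by push_cast; ring
    · intro j
      obtain ⟨D, hD1, hD2⟩ := hD fun i => if i = j then 1 else 0
      refine ⟨D, ?_, fun i => by simpa using hD1 (Fin.natAdd s i), fun i => ?_⟩
      · have hle : Submodule.span ℚ (Set.range t) ≤ LinearMap.ker (D : ℂ →ₗ[ℚ] ℂ) := by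
          rw [Submodule.span_le]
          rintro _ ⟨i, rfl⟩
          simpa using hD1 (Fin.castAdd n i)
        exact hle hpi
      · rw [← hD2 i, ← wZeta_eq hΩ (hp' i), ← wP_eq hΩ (hp' i)]
  · obtain ⟨y, hy1, hy2⟩ := hgen hE
    exact indep_of_full (Fin.append t p) o y hy2
      (fun k => mem_closure_of_mem_adjoin hK (hy1 k)) (by omega)
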